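/- Let X ⊆ P^4_K be a generic projection of the Veronese surface F ⊆ P^5_K, i.e., the projection of F from a point P ∈ P^5_K \ F at which the generic symmetric 3×3 matrix M defining F has rank 3. Then X is a non-degenerate surface of degree 4 and codimension 2 with depth A_X = 1, the defining ideal I_X contains no quadric, and the Betti diagram of I_X has exactly the entries β_{1,2} = 7, β_{2,2} = 10, β_{3,2} = 5, β_{4,2} = 1, with all other entries β_{i,j} (i ≥ 1) equal to zero. -/

import Mathlib

noncomputable section

open MvPolynomial

/-- The polynomial ring `S = K[x_0, …, x_r]`, the homogeneous coordinate ring of `ℙ^r_K`. -/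
abbrev PS (K : Type) [Field K] (r : ℕ) : Type := MvPolynomial (Fin (r + 1)) K

namespace AMD

variable (K : Type) [Field K] (r : ℕ)

/-- `I` is a homogeneous ideal of `S = K[x_0, …, x_r]`. -/
def IsHomIdeal (I : Ideal (PS K r)) : Prop :=
  ∀ p ∈ I, ∀ n : ℕ, homogeneousComponent n p ∈ I

/-- `X = V_+(I)` is non-degenerate: `I` contains no nonzero linear form. -/
def Nondeg (I : Ideal (PS K r)) : Prop :=
  ∀ p ∈ I, p.IsHomogeneous 1 → p = 0

/-- The irrelevant maximal ideal of the homogeneous coordinate ring `A_X = S/I`. -/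
def maxIdl (I : Ideal (PS K r)) : Ideal (PS K r ⧸ I) :=
  (Ideal.span (Set.range (X : Fin (r + 1) → PS K r))).map (Ideal.Quotient.mk I)

/-- `dim X = d`, i.e. the Krull dimension of `A_X = S/I` equals `d + 1`. -/
def DimEq (I : Ideal (PS K r)) (d : ℕ) : Prop :=
  ringKrullDim (PS K r ⧸ I) = (((d : ℕ∞) + 1 : ℕ∞) : WithBot ℕ∞)

/-- The degree-`n` homogeneous component of `A_X = S/I`, as a `K`-subspace. -/
def quotComponent (I : Ideal (PS K r)) (n : ℕ) : Submodule K (PS K r ⧸ I) :=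
  (homogeneousSubmodule (Fin (r + 1)) K n).map (Ideal.Quotient.mkₐ K I).toLinearMap

/-- The Hilbert series of the graded algebra `A_X = S/I`. -/
def hilbSeries (I : Ideal (PS K r)) : PowerSeries ℤ :=
  PowerSeries.mk fun n => (Module.finrank K (quotComponent K r I n) : ℤ)

/-- `deg X = e`, where `d = dim X`:  the numerator polynomial of the Hilbert series of
`A_X` with respect to the denominator `(1 - λ)^(d+1)` takes the value `e` at `λ = 1`. -/
def DegreeEq (I : Ideal (PS K r)) (d e : ℕ) : Prop :=
  ∃ h : Polynomial ℤ,
    hilbSeries K r I * (1 - PowerSeries.X) ^ (d + 1) = PowerSeries.mk (fun n => h.coeff n) ∧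
    h.eval 1 = (e : ℤ)

/-- A graded automorphism of `S`, i.e. a linear change of coordinates of `ℙ^r_K`. -/
def IsGrAut (φ : PS K r ≃ₐ[K] PS K r) : Prop :=
  ∀ i, (φ (X i)).IsHomogeneous 1

/-- `X = V_+(I) ⊆ ℙ^r_K` is a cone (over a variety lying in some hyperplane): after a
linear change of coordinates, `I` is generated by polynomials not involving the last
variable. -/
def IsConeIdeal (I : Ideal (PS K r)) : Prop :=
  ∃ φ : PS K r ≃ₐ[K] PS K r, IsGrAut K r φ ∧
    ∃ J : Ideal (MvPolynomial (Fin r) K),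
      Ideal.map φ I = Ideal.map (rename (Fin.castSucc : Fin r → Fin (r + 1))) J

/-- A (weakly) regular sequence on the ring `A`. -/
def IsRegSeq {A : Type} [CommRing A] (rs : List A) : Prop :=
  ∀ (i : Fin rs.length) (y : A),
    rs.get i * y ∈ Ideal.span {x | x ∈ rs.take i.1} → y ∈ Ideal.span {x | x ∈ rs.take i.1}

/-- `depth A_X = t`: the maximal length of a regular sequence on `A_X = S/I` consisting
of elements of the irrelevant maximal ideal is `t`. -/
def DepthEq (I : Ideal (PS K r)) (t : ℕ) : Prop :=
  (∃ rs : List (PS K r ⧸ I), rs.length = t ∧ (∀ x ∈ rs, x ∈ maxIdl K r I) ∧ IsRegSeq rs) ∧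
  ∀ rs : List (PS K r ⧸ I), (∀ x ∈ rs, x ∈ maxIdl K r I) → IsRegSeq rs → rs.length ≤ t

/-- `X` is arithmetically Cohen-Macaulay: `depth A_X = dim A_X`. -/
def IsACM (I : Ideal (PS K r)) : Prop :=
  ∃ t : ℕ, ringKrullDim (PS K r ⧸ I) = ((t : ℕ∞) : WithBot ℕ∞) ∧ DepthEq K r I t

/-- The socle `{y | m·y = 0}` of `B`, as a `K`-subspace of `B`. -/
def socle (B : Type) [CommRing B] [Algebra K B] (m : Ideal B) : Submodule K B where
  carrier := {y | ∀ z ∈ m, z * y = 0}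
  add_mem' := by
    intro a b ha hb z hz
    rw [mul_add, ha z hz, hb z hz, add_zero]
  zero_mem' := by
    intro z hz
    rw [mul_zero]
  smul_mem' := by
    intro c y hy z hz
    rw [mul_smul_comm, hy z hz, smul_zero]

/-- `X` is arithmetically Gorenstein: `A_X = S/I` is Cohen-Macaulay and its Artinian
reduction by a maximal regular sequence has a one-dimensional socle. -/
def IsArithGorenstein (I : Ideal (PS K r)) : Prop :=
  ∃ (t : ℕ) (rs : List (PS K r ⧸ I)),
    ringKrullDim (PS K r ⧸ I) = ((t : ℕ∞) : WithBot ℕ∞) ∧ rs.length = t ∧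
    (∀ x ∈ rs, x ∈ maxIdl K r I) ∧ IsRegSeq rs ∧
    Module.finrank K
      (socle K ((PS K r ⧸ I) ⧸ Ideal.span {x | x ∈ rs})
        (Ideal.map (Ideal.Quotient.mk (Ideal.span {x | x ∈ rs})) (maxIdl K r I))) = 1

/-- The graded free `S`-module with `β j` generators in "row `j`" for each `j : ℕ`. -/
abbrev FreeGr (β : ℕ → ℕ) : Type := ((j : ℕ) × Fin (β j)) →₀ PS K r

/-- `φ` is a minimal graded homomorphism of graded free modules, where the generator
`(j, t)` of the source has degree `m₁ + j` and the generator `(j', t')` of the target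
has degree `m₂ + j'`: every matrix entry of `φ` is either zero or homogeneous of the
appropriate positive degree. -/
def IsMinGrMap (b₁ b₂ : ℕ → ℕ) (m₁ m₂ : ℕ)
    (φ : FreeGr K r b₁ →ₗ[PS K r] FreeGr K r b₂) : Prop :=
  ∀ (j : ℕ) (t : Fin (b₁ j)) (j' : ℕ) (t' : Fin (b₂ j')),
    (φ (Finsupp.single ⟨j, t⟩ 1)) ⟨j', t'⟩ = 0 ∨
      ∃ dd : ℕ, 1 ≤ dd ∧ dd + (m₂ + j') = m₁ + j ∧
        ((φ (Finsupp.single ⟨j, t⟩ 1)) ⟨j', t'⟩).IsHomogeneous dd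

/-- `b` is the Betti diagram of the ideal `I ⊆ S`, i.e.
`b i j = dim_K Tor_i^S(K, S/I)_{i+j}` for all `i ≥ 1`.  This is expressed by the
existence of a minimal graded free resolution `⋯ → F₂ → F₁ → S → S/I → 0` of `S/I`
in which, for `i ≥ 1`, the free module `F_i` has exactly `b i j` generators of degree
`i + j`. -/
def HasBettiDiagram (I : Ideal (PS K r)) (b : ℕ → ℕ → ℕ) : Prop :=
  ∃ (φ : (i : ℕ) → (FreeGr K r (b (i + 2)) →ₗ[PS K r] FreeGr K r (b (i + 1))))
    (ε : FreeGr K r (b 1) →ₗ[PS K r] PS K r),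
    (∀ (j : ℕ) (t : Fin (b 1 j)), (ε (Finsupp.single ⟨j, t⟩ 1)).IsHomogeneous (1 + j)) ∧
    (∀ i, IsMinGrMap K r (b (i + 2)) (b (i + 1)) (i + 2) (i + 1) (φ i)) ∧
    LinearMap.range ε = I ∧
    LinearMap.ker ε = LinearMap.range (φ 0) ∧
    ∀ i, LinearMap.ker (φ i) = LinearMap.range (φ (i + 1))

/-- The Pfaffian of a (skew-symmetric) `4 × 4` matrix. -/
def pfaff4 {R : Type} [CommRing R] (N : Matrix (Fin 4) (Fin 4) R) : R :=
  N 0 1 * N 2 3 - N 0 2 * N 1 3 + N 0 3 * N 1 2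

/-- The five submaximal (`4 × 4`) Pfaffians of a skew-symmetric `5 × 5` matrix. -/
def subPfaffian {R : Type} [CommRing R] (M : Matrix (Fin 5) (Fin 5) R) (i : Fin 5) : R :=
  pfaff4 (M.submatrix i.succAbove i.succAbove)

/-- `X = V_+(I)` is the Pfaffian variety defined by the five `4 × 4` Pfaffians of a
skew-symmetric `5 × 5` matrix of linear forms. -/
def IsPfaffianVariety (I : Ideal (PS K r)) : Prop :=
  ∃ M : Matrix (Fin 5) (Fin 5) (PS K r),
    M.transpose = -M ∧ (∀ i j, (M i j).IsHomogeneous 1) ∧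
    I = Ideal.span (Set.range (subPfaffian M))

/-- The vanishing ideal of the coordinate point `(0 : ⋯ : 0 : 1) ∈ ℙ^{r+1}_K`. -/
def pointIdl : Ideal (PS K (r + 1)) :=
  Ideal.span ((X : Fin (r + 2) → PS K (r + 1)) '' {i : Fin (r + 2) | i ≠ Fin.last (r + 1)})

/-- `X = V_+(I) ⊆ ℙ^r_K` is the image of `Z = V_+(J) ⊆ ℙ^{r+1}_K` under the projection
from a point `P ∈ ℙ^{r+1}_K ∖ Z`: after a linear change of coordinates moving `P` to
`(0 : ⋯ : 0 : 1)`, the ideal `I` is the contraction of `J` to `K[x_0, …, x_r]`. -/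
def IsProjectionOf (I : Ideal (PS K r)) (J : Ideal (PS K (r + 1))) : Prop :=
  ∃ ψ : PS K (r + 1) ≃ₐ[K] PS K (r + 1), IsGrAut K (r + 1) ψ ∧
    ¬ Ideal.map ψ J ≤ pointIdl K r ∧
    I = Ideal.comap (rename (Fin.castSucc : Fin (r + 1) → Fin (r + 2))) (Ideal.map ψ J)

/-- The ideal of the Veronese surface `F ⊆ ℙ^5_K`, generated by the `2 × 2` minors of
the generic symmetric `3 × 3` matrix with rows `(x₀,x₁,x₂), (x₁,x₃,x₄), (x₂,x₄,x₅)`. -/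
def veroneseIdeal : Ideal (PS K 5) :=
  Ideal.span {X 0 * X 3 - X 1 * X 1, X 0 * X 4 - X 1 * X 2, X 1 * X 4 - X 2 * X 3,
    X 0 * X 5 - X 2 * X 2, X 1 * X 5 - X 2 * X 4, X 3 * X 5 - X 4 * X 4}

/-- The determinant of the generic symmetric `3 × 3` matrix defining the Veronese
surface; it cuts out the secant variety of `F ⊆ ℙ^5_K`. -/
def veroneseDet : PS K 5 :=
  X 0 * X 3 * X 5 - X 0 * X 4 * X 4 - X 1 * X 1 * X 5 + 2 * (X 1 * X 2 * X 4) -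
    X 2 * X 2 * X 3

/-- `X = V_+(I) ⊆ ℙ^4_K` is a generic projection of the Veronese surface `F ⊆ ℙ^5_K`,
i.e. the projection of `F` from a point `P ∈ ℙ^5_K ∖ F` at which the generic symmetric
`3 × 3` matrix `M` has rank `3` (equivalently, `P` does not lie on the secant variety
`{det M = 0}` of `F`). -/
def IsGenProjVeronese4 (I : Ideal (PS K 4)) : Prop :=
  ∃ ψ : PS K 5 ≃ₐ[K] PS K 5, IsGrAut K 5 ψ ∧
    ¬ Ideal.map ψ (Ideal.span {veroneseDet K}) ≤ pointIdl K 4 ∧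
    I = Ideal.comap (rename (Fin.castSucc : Fin 5 → Fin 6)) (Ideal.map ψ (veroneseIdeal K))

/-- `X = V_+(I) ⊆ ℙ^r_K` is a generic projection of the Veronese surface (which forces
`r = 4`). -/
def IsGenProjVeronese (I : Ideal (PS K r)) : Prop :=
  ∃ h : r + 1 = 5, IsGenProjVeronese4 K (Ideal.map (rename (Fin.cast h)) I)

/-- `X = V_+(I) ⊆ ℙ^r_K` is a generic projection of (a cone over) the Veronese surface
`F ⊆ ℙ^5_K`:  `X` is the projection of a cone `Z ⊆ ℙ^{r+1}_K` over `F` from a point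
not lying on the (cone over the) secant variety of `F`. -/
def IsGenProjVeroneseCone (I : Ideal (PS K r)) : Prop :=
  ∃ (h : 6 ≤ r + 2) (ψ : PS K (r + 1) ≃ₐ[K] PS K (r + 1)), IsGrAut K (r + 1) ψ ∧
    ¬ Ideal.map ψ (Ideal.map (rename (Fin.castLE h))
        (Ideal.span {veroneseDet K})) ≤ pointIdl K r ∧
    I = Ideal.comap (rename (Fin.castSucc : Fin (r + 1) → Fin (r + 2)))
      (Ideal.map ψ (Ideal.map (rename (Fin.castLE h)) (veroneseIdeal K)))

/-- The ideal of the rational normal scroll `S(a_1, …, a_k)`, generated by the `2 × 2`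
minors of the standard `2 × (Σ a_i)` matrix of indeterminates. -/
def scrollIdeal (k : ℕ) (a : Fin k → ℕ) :
    Ideal (MvPolynomial ((i : Fin k) × Fin (a i + 1)) K) :=
  Ideal.span {p | ∃ (i : Fin k) (j : Fin (a i)) (i' : Fin k) (j' : Fin (a i')),
    p = X ⟨i, j.castSucc⟩ * X ⟨i', j'.succ⟩ - X ⟨i, j.succ⟩ * X ⟨i', j'.castSucc⟩}

/-- The affine cone in `K^{r+2}` of the projective scheme `V_+(J) ⊆ ℙ^{r+1}_K`. -/
def zeroSet (J : Ideal (PS K (r + 1))) : Set (Fin (r + 2) → K) :=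
  {v | ∀ f ∈ J, MvPolynomial.eval v f = 0}

/-- Restriction of polynomials to the plane spanned by the vectors `p` and `q`
(i.e. to the line through the corresponding projective points). -/
def lineRestrict (p q : Fin (r + 2) → K) : PS K (r + 1) →ₐ[K] MvPolynomial (Fin 2) K :=
  aeval fun i => MvPolynomial.C (p i) * X 0 + MvPolynomial.C (q i) * X 1

/-- The line through the (independent) points `p`, `q` is a secant line of
`Z = V_+(J)`: the scheme `Z ∩ L ⊆ L ≅ ℙ^1` has length at least `2`, i.e. the
restriction of `J` to the line is contained in a principal ideal generated by a
form of degree `≥ 2` (or is zero, in which case `L ⊆ Z`). -/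
def IsSecantLine (J : Ideal (PS K (r + 1))) (p q : Fin (r + 2) → K) : Prop :=
  ∃ h : MvPolynomial (Fin 2) K,
    (∀ f ∈ J, lineRestrict K r p q f ∈ Ideal.span {h}) ∧
    (h = 0 ∨ ∃ dd : ℕ, 2 ≤ dd ∧ h.IsHomogeneous dd)

/-- The (affine cone over the) secant cone `Sec_P(Z)` of `Z = V_+(J)` with respect to
the point `P = [p]`: the union of `{P}` and of all secant lines of `Z` through `P`. -/
def secantCone (J : Ideal (PS K (r + 1))) (p : Fin (r + 2) → K) : Set (Fin (r + 2) → K) :=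
  {v | ∃ a : K, v = a • p} ∪
    {v | ∃ q : Fin (r + 2) → K, LinearIndependent K ![p, q] ∧ IsSecantLine K r J p q ∧
      ∃ a b : K, v = a • p + b • q}

/-- The (homogeneous) vanishing ideal of a subset of the affine cone `K^{r+2}`. -/
def vanishingIdl (T : Set (Fin (r + 2) → K)) : Ideal (PS K (r + 1)) where
  carrier := {f | ∀ v ∈ T, MvPolynomial.eval v f = 0}
  add_mem' := by
    intro a b ha hb v hv
    rw [map_add, ha v hv, hb v hv, add_zero]
  zero_mem' := by
    intro v hv
    rw [map_zero]
  smul_mem' := by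
    intro c f hf v hv
    rw [smul_eq_mul, map_mul, hf v hv, mul_zero]

/-- `X = V_+(I) ⊆ ℙ^r_K` is the image of `Z = V_+(J) ⊆ ℙ^{r+1}_K` under the linear
projection `π : ℙ^{r+1}_K ∖ {P} → ℙ^r_K` from the point `P = [p]`:  `I` is the
contraction of `J` along the substitution homomorphism induced by a surjective linear
map `K^{r+2} → K^{r+1}` with kernel `K·p`. -/
def IsProjectionFromPoint (I : Ideal (PS K r)) (J : Ideal (PS K (r + 1)))
    (p : Fin (r + 2) → K) : Prop :=
  ∃ π : (Fin (r + 2) → K) →ₗ[K] (Fin (r + 1) → K),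
    Function.Surjective π ∧ LinearMap.ker π = Submodule.span K {p} ∧
    I = Ideal.comap
      (aeval (fun j : Fin (r + 1) =>
        ∑ i : Fin (r + 2), MvPolynomial.C (π (Pi.single i 1) j) * X i) :
          PS K r →ₐ[K] PS K (r + 1)) J

end AMD

namespace GPV

section Koszul
variable {S : Type} [CommRing S]

/-- One step of the iterated mapping cone defining the total Koszul complex. -/
def coneD {C : Type} [AddCommGroup C] [Module S C] (x : S) (d : C →ₗ[S] C) :
    (C × C) →ₗ[S] (C × C) :=
  LinearMap.prod (d.comp (LinearMap.fst S C C) + x • LinearMap.snd S C C)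
    (-(d.comp (LinearMap.snd S C C)))

theorem coneD_apply {C : Type} [AddCommGroup C] [Module S C] (x : S) (d : C →ₗ[S] C) (a b : C) :
    coneD x d (a, b) = (d a + x • b, - d b) := by
  simp [coneD]

/-- The complex `(C, d)` is exact outside degree `0`, where the homology is `S / J`. -/
structure Ex {C : Type} [AddCommGroup C] [Module S C] (d : C →ₗ[S] C) (ι : S →ₗ[S] C)
    (J : Ideal S) : Prop where
  dι : ∀ c, d (ι c) = 0
  ex : ∀ f, d f = 0 → ∃ g c, f = d g + ι c
  mem : ∀ c g, ι c = d g → c ∈ J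
  surj : ∀ c ∈ J, ∃ g, ι c = d g

theorem Ex.cone {C : Type} [AddCommGroup C] [Module S C] {d : C →ₗ[S] C} {ι : S →ₗ[S] C}
    {J : Ideal S} (h : Ex d ι J) (x : S) (hx : ∀ c, x * c ∈ J → c ∈ J) :
    Ex (coneD x d) ((LinearMap.inl S C C).comp ι) (J ⊔ Ideal.span {x}) where
  dι c := by simp [coneD_apply, h.dι]
  ex := by
    rintro ⟨f0, f1⟩ hf
    rw [coneD_apply] at hf
    obtain ⟨hf0, hf1⟩ := Prod.mk.inj hf
    obtain ⟨g1, c, rfl⟩ := h.ex f1 (neg_eq_zero.mp hf1)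
    have hc : c ∈ J := by
      apply hx
      apply h.mem _ (-f0 - x • g1)
      have : ι (x * c) = x • ι c := by rw [← smul_eq_mul, map_smul]
      rw [this, map_sub, map_neg, map_smul]
      rw [smul_add] at hf0
      rw [← sub_eq_zero, ← hf0]; abel
    obtain ⟨k, hk⟩ := h.surj c hc
    have hd : d (f0 + x • (g1 + k)) = 0 := by
      rw [map_add, map_smul, map_add, ← hk, hf0]
    obtain ⟨l, c', hl⟩ := h.ex _ hd
    refine ⟨(l, -(g1 + k)), c', ?_⟩
    rw [coneD_apply]
    simp only [LinearMap.coe_comp, LinearMap.coe_inl, Function.comp_apply, Prod.mk_add_mk,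
      Prod.mk.injEq]
    constructor
    · rw [add_right_comm, ← hl, smul_neg]; abel
    · rw [map_neg, map_add, hk]; abel
  mem := by
    rintro c ⟨g0, g1⟩ hg
    rw [coneD_apply] at hg
    obtain ⟨h0, h1⟩ := Prod.mk.inj hg
    change ι c = _ at h0
    change (0 : C) = _ at h1
    obtain ⟨k, e, rfl⟩ := h.ex g1 (neg_eq_zero.mp h1.symm)
    have : c - x * e ∈ J := by
      apply h.mem _ (g0 + x • k)
      have h2 : ι (x * e) = x • ι e := by rw [← smul_eq_mul, map_smul]
      rw [map_sub, h0, h2, map_add, map_smul, smul_add]; abel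
    have h3 : c = (c - x * e) + x * e := by ring
    rw [h3]
    exact Ideal.add_mem _ (Ideal.mem_sup_left this)
      (Ideal.mem_sup_right (Ideal.mul_mem_right _ _ (Ideal.mem_span_singleton_self x)))
  surj := by
    intro c hc
    obtain ⟨j, hj, z, hz, rfl⟩ := Submodule.mem_sup.mp hc
    obtain ⟨e, rfl⟩ := Ideal.mem_span_singleton'.mp hz
    obtain ⟨g, hg⟩ := h.surj j hj
    refine ⟨(g, ι e), ?_⟩
    have h2 : ι (e * x) = x • ι e := by rw [mul_comm, ← smul_eq_mul, map_smul]
    simp [coneD_apply, h.dι, hg, h2]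

theorem Ex.base : Ex (S := S) (0 : S →ₗ[S] S) LinearMap.id ⊥ where
  dι c := rfl
  ex f _ := ⟨0, f, by simp⟩
  mem c g h := by simpa using h
  surj c hc := ⟨0, by simpa using hc⟩

/-- The total Koszul differential on five elements. -/
abbrev kosD (y : Fin 5 → S) :=
  coneD (y 0) (coneD (y 1) (coneD (y 2) (coneD (y 3) (coneD (y 4) (0 : S →ₗ[S] S)))))

/-- The sequence `y 4, y 3, y 2, y 1, y 0` is weakly regular. -/
structure Reg5 (y : Fin 5 → S) : Prop where
  h4 : ∀ c, y 4 * c ∈ (⊥ : Ideal S) → c ∈ (⊥ : Ideal S)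
  h3 : ∀ c, y 3 * c ∈ ((⊥ : Ideal S) ⊔ Ideal.span {y 4}) → c ∈ ((⊥ : Ideal S) ⊔ Ideal.span {y 4})
  h2 : ∀ c, y 2 * c ∈ ((⊥ : Ideal S) ⊔ Ideal.span {y 4} ⊔ Ideal.span {y 3}) →
    c ∈ ((⊥ : Ideal S) ⊔ Ideal.span {y 4} ⊔ Ideal.span {y 3})
  h1 : ∀ c, y 1 * c ∈ ((⊥ : Ideal S) ⊔ Ideal.span {y 4} ⊔ Ideal.span {y 3} ⊔ Ideal.span {y 2}) →
    c ∈ ((⊥ : Ideal S) ⊔ Ideal.span {y 4} ⊔ Ideal.span {y 3} ⊔ Ideal.span {y 2})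
  h0 : ∀ c, y 0 * c ∈ ((⊥ : Ideal S) ⊔ Ideal.span {y 4} ⊔ Ideal.span {y 3} ⊔ Ideal.span {y 2} ⊔
      Ideal.span {y 1}) →
    c ∈ ((⊥ : Ideal S) ⊔ Ideal.span {y 4} ⊔ Ideal.span {y 3} ⊔ Ideal.span {y 2} ⊔
      Ideal.span {y 1})

theorem Reg5.ex {y : Fin 5 → S} (h : Reg5 y) :
    ∀ f, kosD y f = 0 → ∃ g c, f = kosD y g + (((((c, 0), 0), 0), 0), 0) := by
  intro f hf
  obtain ⟨g, c, hg⟩ := (((((Ex.base (S := S)).cone (y 4) h.h4).cone (y 3) h.h3).cone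
    (y 2) h.h2).cone (y 1) h.h1).cone (y 0) h.h0 |>.ex f hf
  exact ⟨g, c, hg⟩

/-- Koszul differential `Λ² → Λ¹`; basis `01,02,03,04,12,13,14,23,24,34`. -/
def kd2 (y : Fin 5 → S) (b : Fin 10 → S) : Fin 5 → S :=
  ![-(y 1 * b 0) - y 2 * b 1 - y 3 * b 2 - y 4 * b 3,
    y 0 * b 0 - y 2 * b 4 - y 3 * b 5 - y 4 * b 6,
    y 0 * b 1 + y 1 * b 4 - y 3 * b 7 - y 4 * b 8,
    y 0 * b 2 + y 1 * b 5 + y 2 * b 7 - y 4 * b 9,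
    y 0 * b 3 + y 1 * b 6 + y 2 * b 8 + y 3 * b 9]

/-- Koszul differential `Λ³ → Λ²`; basis of `Λ³`
`012,013,014,023,024,034,123,124,134,234`. -/
def kd3 (y : Fin 5 → S) (e : Fin 10 → S) : Fin 10 → S :=
  ![y 2 * e 0 + y 3 * e 1 + y 4 * e 2,
    -(y 1 * e 0) + y 3 * e 3 + y 4 * e 4,
    -(y 1 * e 1) - y 2 * e 3 + y 4 * e 5,
    -(y 1 * e 2) - y 2 * e 4 - y 3 * e 5,
    y 0 * e 0 + y 3 * e 6 + y 4 * e 7,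
    y 0 * e 1 - y 2 * e 6 + y 4 * e 8,
    y 0 * e 2 - y 2 * e 7 - y 3 * e 8,
    y 0 * e 3 + y 1 * e 6 + y 4 * e 9,
    y 0 * e 4 + y 1 * e 7 - y 3 * e 9,
    y 0 * e 5 + y 1 * e 8 + y 2 * e 9]

/-- Koszul differential `Λ⁴ → Λ³`; basis of `Λ⁴` `0123,0124,0134,0234,1234`. -/
def kd4 (y : Fin 5 → S) (g : Fin 5 → S) : Fin 10 → S :=
  ![-(y 3 * g 0) - y 4 * g 1,
    y 2 * g 0 - y 4 * g 2,
    y 2 * g 1 + y 3 * g 2,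
    -(y 1 * g 0) - y 4 * g 3,
    -(y 1 * g 1) + y 3 * g 3,
    -(y 1 * g 2) - y 2 * g 3,
    y 0 * g 0 - y 4 * g 4,
    y 0 * g 1 + y 3 * g 4,
    y 0 * g 2 - y 2 * g 4,
    y 0 * g 3 + y 1 * g 4]

/-- Koszul differential `Λ⁵ → Λ⁴`. -/
def kd5 (y : Fin 5 → S) (g : Fin 1 → S) : Fin 5 → S :=
  ![y 4 * g 0, -(y 3 * g 0), y 2 * g 0, -(y 1 * g 0), y 0 * g 0]

-- positions: nested pairs, outermost index = membership of 0, innermost = membership of 4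
theorem kos1 {y : Fin 5 → S} (h : Reg5 y) (a : Fin 5 → S)
    (ha : y 0 * a 0 + y 1 * a 1 + y 2 * a 2 + y 3 * a 3 + y 4 * a 4 = 0) :
    ∃ b, a = kd2 y b := by
  obtain ⟨g, c, hg⟩ := h.ex
    (((((0, a 4), (a 3, 0)), ((a 2, 0), (0, 0))), (((a 1, 0), (0, 0)), ((0, 0), (0, 0)))),
     ((((a 0, 0), (0, 0)), ((0, 0), (0, 0))), (((0, 0), (0, 0)), ((0, 0), (0, 0))))) (by
      simp [coneD_apply]
      linear_combination ha)
  obtain ⟨⟨⟨⟨⟨g0, g4⟩, g3, g34⟩, ⟨g2, g24⟩, g23, g234⟩, ⟨⟨g1, g14⟩, g13, g134⟩, ⟨g12, g124⟩, g123,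
    g1234⟩, ⟨⟨⟨g0', g04⟩, g03, g034⟩, ⟨g02, g024⟩, g023, g0234⟩, ⟨⟨g01, g014⟩, g013, g0134⟩,
    ⟨g012, g0124⟩, g0123, g01234⟩ := g
  simp [coneD_apply] at hg
  obtain ⟨⟨⟨⟨⟨-, h4⟩, h3, -⟩, ⟨h2, -⟩, -⟩, ⟨⟨h1, -⟩, -⟩, -⟩, ⟨⟨h0, -⟩, -⟩, -⟩ := hg
  refine ⟨![g01, g02, g03, g04, g12, g13, g14, g23, g24, g34], ?_⟩
  funext i
  fin_cases i <;> simp [kd2]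
  · linear_combination h0.1
  · linear_combination h1
  · linear_combination h2
  · linear_combination h3
  · linear_combination h4

theorem kos2 {y : Fin 5 → S} (h : Reg5 y) (b : Fin 10 → S) (hb : kd2 y b = 0) :
    ∃ e, b = kd3 y e := by
  have e0 := congrFun hb 0
  have e1 := congrFun hb 1
  have e2 := congrFun hb 2
  have e3 := congrFun hb 3
  have e4 := congrFun hb 4
  simp [kd2] at e0 e1 e2 e3 e4
  obtain ⟨g, c, hg⟩ := h.ex
    (((((0, 0), (0, b 9)), ((0, b 8), (b 7, 0))), (((0, b 6), (b 5, 0)), ((b 4, 0), (0, 0)))),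
     ((((0, b 3), (b 2, 0)), ((b 1, 0), (0, 0))), (((b 0, 0), (0, 0)), ((0, 0), (0, 0))))) (by
      simp [coneD_apply]
      refine ⟨⟨⟨⟨?_, ?_⟩, ?_⟩, ?_⟩, ?_⟩
      · linear_combination e4
      · linear_combination e3
      · linear_combination e2
      · linear_combination e1
      · linear_combination e0)
  obtain ⟨⟨⟨⟨⟨g0, g4⟩, g3, g34⟩, ⟨g2, g24⟩, g23, g234⟩, ⟨⟨g1, g14⟩, g13, g134⟩, ⟨g12, g124⟩, g123,
    g1234⟩, ⟨⟨⟨g0', g04⟩, g03, g034⟩, ⟨g02, g024⟩, g023, g0234⟩, ⟨⟨g01, g014⟩, g013, g0134⟩,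
    ⟨g012, g0124⟩, g0123, g01234⟩ := g
  simp [coneD_apply] at hg
  obtain ⟨⟨⟨⟨-, -, h34⟩, ⟨-, h24⟩, h23, -⟩, ⟨⟨-, h14⟩, h13, -⟩, h12, -⟩,
    ⟨⟨⟨-, h04⟩, h03, -⟩, h02, -⟩, h01, -⟩ := hg
  refine ⟨![g012, g013, g014, g023, g024, g034, g123, g124, g134, g234], ?_⟩
  funext i
  fin_cases i <;> simp [kd3]
  · linear_combination h01.1.1
  · linear_combination h02.1
  · linear_combination h03
  · linear_combination h04
  · linear_combination h12.1
  · linear_combination h13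
  · linear_combination h14
  · linear_combination h23
  · linear_combination h24
  · linear_combination h34

theorem kos3 {y : Fin 5 → S} (h : Reg5 y) (e : Fin 10 → S) (hb : kd3 y e = 0) :
    ∃ g, e = kd4 y g := by
  have e0 := congrFun hb 0
  have e1 := congrFun hb 1
  have e2 := congrFun hb 2
  have e3 := congrFun hb 3
  have e4 := congrFun hb 4
  have e5 := congrFun hb 5
  have e6 := congrFun hb 6
  have e7 := congrFun hb 7
  have e8 := congrFun hb 8
  have e9 := congrFun hb 9
  simp [kd3] at e0 e1 e2 e3 e4 e5 e6 e7 e8 e9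
  obtain ⟨g, c, hg⟩ := h.ex
    (((((0, 0), (0, 0)), ((0, 0), (0, e 9))), (((0, 0), (0, e 8)), ((0, e 7), (e 6, 0)))),
     ((((0, 0), (0, e 5)), ((0, e 4), (e 3, 0))), (((0, e 2), (e 1, 0)), ((e 0, 0), (0, 0))))) (by
      simp [coneD_apply]
      refine ⟨⟨⟨?_, ?_, ?_⟩, ⟨?_, ?_⟩, ?_⟩, ⟨⟨?_, ?_⟩, ?_⟩, ?_⟩
      · linear_combination e9
      · linear_combination e8
      · linear_combination e7
      · linear_combination e6
      · linear_combination e5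
      · linear_combination e4
      · linear_combination e3
      · linear_combination e2
      · linear_combination e1
      · linear_combination e0)
  obtain ⟨⟨⟨⟨⟨g0, g4⟩, g3, g34⟩, ⟨g2, g24⟩, g23, g234⟩, ⟨⟨g1, g14⟩, g13, g134⟩, ⟨g12, g124⟩, g123,
    g1234⟩, ⟨⟨⟨g0', g04⟩, g03, g034⟩, ⟨g02, g024⟩, g023, g0234⟩, ⟨⟨g01, g014⟩, g013, g0134⟩,
    ⟨g012, g0124⟩, g0123, g01234⟩ := g
  simp [coneD_apply] at hg
  obtain ⟨⟨⟨-, -, -, h234⟩, ⟨-, -, h134⟩, ⟨-, h124⟩, h123, -⟩,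
    ⟨⟨-, -, h034⟩, ⟨-, h024⟩, h023, -⟩, ⟨⟨-, h014⟩, h013, -⟩, h012, -⟩ := hg
  refine ⟨![g0123, g0124, g0134, g0234, g1234], ?_⟩
  funext i
  fin_cases i <;> simp [kd4]
  · linear_combination h012.1
  · linear_combination h013
  · linear_combination h014
  · linear_combination h023
  · linear_combination h024
  · linear_combination h034
  · linear_combination h123
  · linear_combination h124
  · linear_combination h134
  · linear_combination h234

theorem kos4 {y : Fin 5 → S} (h : Reg5 y) (e : Fin 5 → S) (hb : kd4 y e = 0) :
    ∃ g, e = kd5 y g := by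
  have e0 := congrFun hb 0
  have e1 := congrFun hb 1
  have e2 := congrFun hb 2
  have e3 := congrFun hb 3
  have e4 := congrFun hb 4
  have e5 := congrFun hb 5
  have e6 := congrFun hb 6
  have e7 := congrFun hb 7
  have e8 := congrFun hb 8
  have e9 := congrFun hb 9
  simp [kd4] at e0 e1 e2 e3 e4 e5 e6 e7 e8 e9
  obtain ⟨g, c, hg⟩ := h.ex
    (((((0, 0), (0, 0)), ((0, 0), (0, 0))), (((0, 0), (0, 0)), ((0, 0), (0, e 4)))),
     ((((0, 0), (0, 0)), ((0, 0), (0, e 3))), (((0, 0), (0, e 2)), ((0, e 1), (e 0, 0))))) (by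
      simp [coneD_apply]
      repeat' apply And.intro
      all_goals first
        | linear_combination e0 | linear_combination e1 | linear_combination e2
        | linear_combination e3 | linear_combination e4 | linear_combination e5
        | linear_combination e6 | linear_combination e7 | linear_combination e8
        | linear_combination e9
        | linear_combination -e0 | linear_combination -e1 | linear_combination -e2
        | linear_combination -e3 | linear_combination -e4 | linear_combination -e5
        | linear_combination -e6 | linear_combination -e7 | linear_combination -e8
        | linear_combination -e9)
  obtain ⟨⟨⟨⟨⟨g0, g4⟩, g3, g34⟩, ⟨g2, g24⟩, g23, g234⟩, ⟨⟨g1, g14⟩, g13, g134⟩, ⟨g12, g124⟩, g123,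
    g1234⟩, ⟨⟨⟨g0', g04⟩, g03, g034⟩, ⟨g02, g024⟩, g023, g0234⟩, ⟨⟨g01, g014⟩, g013, g0134⟩,
    ⟨g012, g0124⟩, g0123, g01234⟩ := g
  simp [coneD_apply] at hg
  obtain ⟨⟨⟨-, -, -, -⟩, ⟨-, -, -⟩, ⟨-, -⟩, -, h1234⟩,
    ⟨⟨-, -, -⟩, ⟨-, -⟩, -, h0234⟩, ⟨⟨-, -⟩, -, h0134⟩, ⟨-, h0124⟩, h0123⟩ := hg
  refine ⟨![g01234], ?_⟩
  funext i
  fin_cases i <;> simp [kd5]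
  · linear_combination h0123
  · linear_combination h0124
  · linear_combination h0134
  · linear_combination h0234
  · linear_combination h1234

end Koszul
end GPV

namespace GPV

section Syz
variable {S : Type} [CommRing S]

/-- The five quadrics `q_i` with `y_i w = q_i` on the Veronese surface. -/
def qd (y : Fin 5 → S) : Fin 5 → S :=
  ![y 0 * y 2 + y 1 * y 1, y 0 * y 3, y 0 * y 4 - y 1 * y 3, y 1 * y 4, y 2 * y 4 + y 3 * y 3]

/-- The syzygy statements used for the resolution. -/
structure Syz (y : Fin 5 → S) : Prop where
  s2 : ∀ a : Fin 5 → S,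
    a 0 * y 0 + a 1 * y 1 + a 2 * y 2 + a 3 * y 3 + a 4 * y 4 = 0 →
    a 0 * qd y 0 + a 1 * qd y 1 + a 2 * qd y 2 + a 3 * qd y 3 + a 4 * qd y 4 = 0 →
    ∃ c1 c2 c3 : S, a 0 = c1 * y 4 + c2 * y 3 ∧ a 1 = c1 * y 3 - c2 * y 2 - c3 * y 4 ∧
      a 2 = c2 * y 1 + c3 * y 3 ∧ a 3 = - c1 * y 1 - c2 * y 0 - c3 * y 2 ∧
      a 4 = - c1 * y 0 + c3 * y 1
  ind : ∀ c1 c2 c3 : S, c1 * y 4 + c2 * y 3 = 0 → c1 * y 3 - c2 * y 2 - c3 * y 4 = 0 →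
      c2 * y 1 + c3 * y 3 = 0 → - c1 * y 1 - c2 * y 0 - c3 * y 2 = 0 →
      - c1 * y 0 + c3 * y 1 = 0 → c1 = 0 ∧ c2 = 0 ∧ c3 = 0

theorem Syz.map {S' : Type} [CommRing S'] {y : Fin 5 → S} (h : Syz y) (e : S ≃+* S') :
    Syz (fun i => e (y i)) where
  s2 := by
    intro a h1 h2
    obtain ⟨c1, c2, c3, g0, g1, g2, g3, g4⟩ := h.s2 (fun i => e.symm (a i))
      (by apply e.injective; simpa using h1) (by
        apply e.injective
        simp only [qd] at h2 ⊢
        simpa using h2)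
    refine ⟨e c1, e c2, e c3, ?_, ?_, ?_, ?_, ?_⟩
    · simpa using congrArg e g0
    · simpa using congrArg e g1
    · simpa using congrArg e g2
    · simpa using congrArg e g3
    · simpa using congrArg e g4
  ind := by
    intro c1 c2 c3 g0 g1 g2 g3 g4
    obtain ⟨k1, k2, k3⟩ := h.ind (e.symm c1) (e.symm c2) (e.symm c3)
      (by apply e.injective; simpa using g0) (by apply e.injective; simpa using g1)
      (by apply e.injective; simpa using g2) (by apply e.injective; simpa using g3)
      (by apply e.injective; simpa using g4)
    simpa using And.intro k1 (And.intro k2 k3)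

open Polynomial in
theorem syz_reduce {B : Type} [CommRing B] (y0 y2 y3 : B) (n : ℕ) :
    ∀ a2 a3 a4 : B[X], a2.natDegree ≤ n → a3.natDegree ≤ n → a4.natDegree ≤ n →
    ∃ (c1 c2 c3 : B[X]) (b2 b3 b4 : B),
      a2 = c2 * Polynomial.X + c3 * Polynomial.C y3 + Polynomial.C b2 ∧
      a3 = - c1 * Polynomial.X - c2 * Polynomial.C y0 - c3 * Polynomial.C y2 + Polynomial.C b3 ∧
      a4 = - c1 * Polynomial.C y0 + c3 * Polynomial.X + Polynomial.C b4 := by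
  induction n with
  | zero =>
    intro a2 a3 a4 h2 h3 h4
    refine ⟨0, 0, 0, a2.coeff 0, a3.coeff 0, a4.coeff 0, ?_, ?_, ?_⟩
    · simpa using Polynomial.eq_C_of_natDegree_le_zero h2
    · simpa using Polynomial.eq_C_of_natDegree_le_zero h3
    · simpa using Polynomial.eq_C_of_natDegree_le_zero h4
  | succ n ih =>
    intro a2 a3 a4 h2 h3 h4
    have hd : ∀ a : B[X], a.natDegree ≤ n + 1 → a.divX.natDegree ≤ n := by
      intro a ha; rw [Polynomial.natDegree_divX_eq_natDegree_tsub_one]; omega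
    have hC : ∀ (a : B[X]) (b : B), a.natDegree ≤ n + 1 → (a.divX * Polynomial.C b).natDegree ≤ n := by
      intro a b ha
      exact (Polynomial.natDegree_mul_C_le _ _).trans (hd a ha)
    have hK : ∀ b : B, (Polynomial.C b).natDegree ≤ n := by intro b; simp
    obtain ⟨c1, c2, c3, b2, b3, b4, g2, g3, g4⟩ := ih
      (Polynomial.C (a2.coeff 0) - a4.divX * Polynomial.C y3)
      (Polynomial.C (a3.coeff 0) + a2.divX * Polynomial.C y0 + a4.divX * Polynomial.C y2)
      (Polynomial.C (a4.coeff 0) - a3.divX * Polynomial.C y0)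
      ((Polynomial.natDegree_sub_le_of_le (hK _) (hC _ _ h4)).trans (max_self n).le)
      (Polynomial.natDegree_add_le_of_degree_le (Polynomial.natDegree_add_le_of_degree_le (hK _) (hC _ _ h2)) (hC _ _ h4))
      ((Polynomial.natDegree_sub_le_of_le (hK _) (hC _ _ h3)).trans (max_self n).le)
    refine ⟨c1 - a3.divX, c2 + a2.divX, c3 + a4.divX, b2, b3, b4, ?_, ?_, ?_⟩
    · have := Polynomial.divX_mul_X_add a2
      linear_combination g2 - this
    · have := Polynomial.divX_mul_X_add a3
      linear_combination g3 - this
    · have := Polynomial.divX_mul_X_add a4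
      linear_combination g4 - this

open Polynomial in
theorem quad_zero {B : Type} [CommRing B] {a b c : B}
    (h : 0 = Polynomial.C a * Polynomial.X ^ 2 + Polynomial.C b * Polynomial.X + Polynomial.C c) :
    a = 0 ∧ b = 0 ∧ c = 0 := by
  have c0 := congrArg (fun p => Polynomial.coeff p 0) h
  have c1 := congrArg (fun p => Polynomial.coeff p 1) h
  have c2 := congrArg (fun p => Polynomial.coeff p 2) h
  simp [Polynomial.coeff_X, Polynomial.coeff_C] at c0 c1 c2
  exact ⟨c2.symm, c1.symm, c0.symm⟩

open Polynomial in
theorem syz_const {B : Type} [CommRing B] [IsDomain B] (y0 y2 y3 y4 : B) (h0 : y0 ≠ 0)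
    (h4 : y4 ≠ 0) (hd : y0 * y4 ^ 3 - (y2 * y4 + y3 ^ 2) ^ 2 ≠ 0)
    (a0 a1 : B[X]) (b2 b3 b4 : B)
    (e1 : a0 * Polynomial.C y0 + a1 * Polynomial.X + Polynomial.C b2 * Polynomial.C y2 +
      Polynomial.C b3 * Polynomial.C y3 + Polynomial.C b4 * Polynomial.C y4 = 0)
    (e2 : a0 * (Polynomial.C y0 * Polynomial.C y2 + Polynomial.X * Polynomial.X) +
      a1 * (Polynomial.C y0 * Polynomial.C y3) +
      Polynomial.C b2 * (Polynomial.C y0 * Polynomial.C y4 - Polynomial.X * Polynomial.C y3) +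
      Polynomial.C b3 * (Polynomial.X * Polynomial.C y4) +
      Polynomial.C b4 * (Polynomial.C y2 * Polynomial.C y4 + Polynomial.C y3 * Polynomial.C y3) = 0) :
    a0 = 0 ∧ a1 = 0 ∧ b2 = 0 ∧ b3 = 0 ∧ b4 = 0 := by
  have e3 : a1 * (Polynomial.X ^ 3 + (Polynomial.C (y0 * y2) * Polynomial.X - Polynomial.C (y0 ^ 2 * y3))) =
      Polynomial.C (-(b2 * y2 + b3 * y3 + b4 * y4)) * Polynomial.X ^ 2 +
      Polynomial.C (y0 * (-b2 * y3 + b3 * y4)) * Polynomial.X +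
      Polynomial.C (y0 * (b2 * (y0 * y4 - y2 ^ 2) - b3 * y2 * y3 + b4 * y3 ^ 2)) := by
    simp only [map_add, map_mul, map_sub, map_neg, map_pow]
    linear_combination (Polynomial.C y0 * Polynomial.C y2 + Polynomial.X * Polynomial.X) * e1
      - Polynomial.C y0 * e2
  have ha1 : a1 = 0 := by
    by_contra hne
    have hm : (Polynomial.X ^ 3 + (Polynomial.C (y0 * y2) * Polynomial.X - Polynomial.C (y0 ^ 2 * y3))).natDegree = 3 := by
      compute_degree!
    have hne2 : (Polynomial.X ^ 3 + (Polynomial.C (y0 * y2) * Polynomial.X - Polynomial.C (y0 ^ 2 * y3))) ≠ 0 := by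
      intro h; rw [h] at hm; simp at hm
    have := congrArg Polynomial.natDegree e3
    rw [Polynomial.natDegree_mul hne hne2, hm] at this
    have h2 := Polynomial.natDegree_quadratic_le (a := -(b2 * y2 + b3 * y3 + b4 * y4))
      (b := y0 * (-b2 * y3 + b3 * y4)) (c := y0 * (b2 * (y0 * y4 - y2 ^ 2) - b3 * y2 * y3 + b4 * y3 ^ 2))
    omega
  subst ha1
  rw [zero_mul] at e3
  obtain ⟨c2, c1, c0⟩ := quad_zero e3
  replace c1 := (mul_eq_zero.mp c1).resolve_left h0
  replace c0 := (mul_eq_zero.mp c0).resolve_left h0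
  have d : b2 * (y0 * y4 ^ 3 - (y2 * y4 + y3 ^ 2) ^ 2) = 0 := by
    linear_combination y4 ^ 2 * c0 - y4 * y3 ^ 2 * (-c2) + (y4 * y2 * y3 + y3 ^ 3) * c1
  have hb2 : b2 = 0 := (mul_eq_zero.mp d).resolve_right hd
  subst hb2
  have hb3 : b3 = 0 := by simpa [h4] using c1
  subst hb3
  have hb4 : b4 = 0 := by simpa [h4] using c2
  subst hb4
  simpa [h0] using e1

open Polynomial in
theorem syz_poly {B : Type} [CommRing B] [IsDomain B] (y0 y2 y3 y4 : B) (h0 : y0 ≠ 0)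
    (h3 : y3 ≠ 0)
    (h4 : y4 ≠ 0) (hd : y0 * y4 ^ 3 - (y2 * y4 + y3 ^ 2) ^ 2 ≠ 0) :
    Syz (S := B[X]) ![Polynomial.C y0, Polynomial.X, Polynomial.C y2, Polynomial.C y3,
      Polynomial.C y4] where
  s2 := by
    intro a e1 e2
    obtain ⟨c1, c2, c3, b2, b3, b4, g2, g3, g4⟩ := syz_reduce y0 y2 y3
      (max (a 2).natDegree (max (a 3).natDegree (a 4).natDegree)) (a 2) (a 3) (a 4)
      (by simp) (by simp) (by simp)
    simp [qd] at e1 e2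
    obtain ⟨f0, f1, f2, f3, f4⟩ := syz_const y0 y2 y3 y4 h0 h4 hd
      (a 0 - (c1 * Polynomial.C y4 + c2 * Polynomial.C y3))
      (a 1 - (c1 * Polynomial.C y3 - c2 * Polynomial.C y2 - c3 * Polynomial.C y4)) b2 b3 b4
      (by rw [g2, g3, g4] at e1; linear_combination e1)
      (by rw [g2, g3, g4] at e2; linear_combination e2)
    subst f2 f3 f4
    refine ⟨c1, c2, c3, sub_eq_zero.mp f0, sub_eq_zero.mp f1, ?_, ?_, ?_⟩
    · rw [g2]; simp
    · rw [g3]; simp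
    · rw [g4]; simp
  ind := by
    intro c1 c2 c3 g0 g1 g2 g3 g4
    simp at g0 g1 g2 g3 g4
    have hk : (Polynomial.C (y0 * y3 ^ 2) - Polynomial.C y4 * Polynomial.X ^ 2) ≠ 0 := by
      intro h
      generalize y0 * y3 ^ 2 = z at h
      have := congrArg (fun p => Polynomial.coeff p 2) h
      simp [Polynomial.coeff_C] at this
      exact h4 this
    have hc : c1 * (Polynomial.C (y0 * y3 ^ 2) - Polynomial.C y4 * Polynomial.X ^ 2) = 0 := by
      simp only [map_mul, map_pow]
      linear_combination (-(Polynomial.C y3 * Polynomial.C y3)) * g4 + Polynomial.C y3 * Polynomial.X * g2 - Polynomial.X ^ 2 * g0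
    have h1 := (mul_eq_zero.mp hc).resolve_right hk
    subst h1
    have h2 : c2 = 0 := by simpa [h3] using g0
    have h3 : c3 = 0 := by simpa using g4
    exact ⟨rfl, h2, h3⟩

theorem syz_X (K : Type) [Field K] : Syz (X : Fin 5 → PS K 4) := by
  have hev : ∀ p : MvPolynomial (Fin 4) K, eval ![1, 0, 1, 1] p ≠ 0 → p ≠ 0 := by
    rintro p hp rfl; simp at hp
  have hev' : ∀ p : MvPolynomial (Fin 4) K, eval ![1, 0, 0, 1] p ≠ 0 → p ≠ 0 := by
    rintro p hp rfl; simp at hp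
  have h := syz_poly (B := MvPolynomial (Fin 4) K) (X 0) (X 1) (X 2) (X 3)
    (hev _ (by simp)) (hev _ (by simp)) (hev _ (by simp)) (hev' _ (by simp))
  let e : PS K 4 ≃ₐ[K] Polynomial (MvPolynomial (Fin 4) K) :=
    (renameEquiv K (Equiv.swap (0 : Fin 5) 1)).trans (finSuccEquiv K 4)
  have h' := h.map e.symm.toRingEquiv
  convert h' using 2 with i
  apply e.injective
  change e (X i) = e (e.symm _)
  rw [AlgEquiv.apply_symm_apply]
  have e0 : e (X 0) = Polynomial.C (X 0) := by
    simpa [e] using finSuccEquiv_X_succ (R := K) (j := (0 : Fin 4))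
  have e1 : e (X 1) = Polynomial.X := by
    simpa [e] using finSuccEquiv_X_zero (R := K) (n := 4)
  have e2 : e (X 2) = Polynomial.C (X 1) := by
    have : Equiv.swap (0 : Fin 5) 1 2 = 2 := by decide
    simpa [e, this] using finSuccEquiv_X_succ (R := K) (j := (1 : Fin 4))
  have e3 : e (X 3) = Polynomial.C (X 2) := by
    have : Equiv.swap (0 : Fin 5) 1 3 = 3 := by decide
    simpa [e, this] using finSuccEquiv_X_succ (R := K) (j := (2 : Fin 4))
  have e4 : e (X 4) = Polynomial.C (X 3) := by
    have : Equiv.swap (0 : Fin 5) 1 4 = 4 := by decide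
    simpa [e, this] using finSuccEquiv_X_succ (R := K) (j := (3 : Fin 4))
  fin_cases i
  · exact e0
  · exact e1
  · exact e2
  · exact e3
  · exact e4

/-- A variable is a nonzerodivisor modulo other variables. -/
theorem X_colon (K : Type) [Field K] (s : Set (Fin 5)) (i : Fin 5) (hi : i ∉ s) (c : PS K 4)
    (h : X i * c ∈ Ideal.span ((X : Fin 5 → PS K 4) '' s)) :
    c ∈ Ideal.span ((X : Fin 5 → PS K 4) '' s) := by
  rw [mem_ideal_span_X_image] at h ⊢
  intro m hm
  obtain ⟨j, hj, hj'⟩ := h (m + Finsupp.single i 1) (by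
    rw [mem_support_iff, mul_comm, coeff_mul_X]; exact mem_support_iff.mp hm)
  refine ⟨j, hj, ?_⟩
  have : i ≠ j := by rintro rfl; exact hi hj
  simpa [Finsupp.single_apply, this] using hj'

theorem reg_X (K : Type) [Field K] : Reg5 (X : Fin 5 → PS K 4) := by
  have key : ∀ (s : Set (Fin 5)) (i : Fin 5) (J : Ideal (PS K 4)), i ∉ s →
      J = Ideal.span ((X : Fin 5 → PS K 4) '' s) → ∀ c, X i * c ∈ J → c ∈ J := by
    rintro s i J hi rfl c hc
    exact X_colon K s i hi c hc
  constructor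
  · exact key ∅ 4 _ (by simp) (by simp)
  · exact key {4} 3 _ (by simp) (by simp)
  · exact key {4, 3} 2 _ (by simp) (by simp [Set.image_pair, Ideal.span_insert])
  · exact key {4, 3, 2} 1 _ (by simp)
      (by simp [Set.image_insert_eq, Ideal.span_insert, sup_assoc])
  · exact key {4, 3, 2, 1} 0 _ (by simp)
      (by simp [Set.image_insert_eq, Ideal.span_insert, sup_assoc])

theorem Reg5.map {S' : Type} [CommRing S'] {y : Fin 5 → S} (h : Reg5 y) (e : S ≃+* S') :
    Reg5 (fun i => e (y i)) := by
  have key : ∀ (i : Fin 5) (J : Ideal S) (J' : Ideal S'), J' = J.map e →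
      (∀ c, y i * c ∈ J → c ∈ J) → ∀ c, e (y i) * c ∈ J' → c ∈ J' := by
    rintro i J J' rfl hJ c hc
    rw [Ideal.mem_map_of_equiv] at hc ⊢
    obtain ⟨d, hd, hd'⟩ := hc
    refine ⟨e.symm c, hJ _ ?_, by simp⟩
    have : d = y i * e.symm c := by
      apply e.injective; simpa using hd'
    rwa [← this]
  constructor
  · exact key 4 _ _ (by simp) h.h4
  · exact key 3 _ _ (by simp [Ideal.map_span]) h.h3
  · exact key 2 _ _ (by simp [Ideal.map_sup, Ideal.map_span]) h.h2
  · exact key 1 _ _ (by simp [Ideal.map_sup, Ideal.map_span]) h.h1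
  · exact key 0 _ _ (by simp [Ideal.map_sup, Ideal.map_span]) h.h0

end Syz
end GPV

namespace GPV

section Parity
variable {K : Type} [Field K]

theorem coeff_par {σ : Type} [DecidableEq σ] (e e' : σ →₀ ℕ) (he : ∀ i, e i ≤ 1) (he' : ∀ i, e' i ≤ 1)
    (m : σ →₀ ℕ) (p : MvPolynomial σ K) :
    coeff (2 • m + e) (monomial e' 1 * expand 2 p) = if e' = e then coeff m p else 0 := by
  rw [coeff_monomial_mul']
  split_ifs with h1 h2 h2
  · subst h2
    rw [add_tsub_cancel_right, one_mul, coeff_expand_smul _ (by norm_num)]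
  · rw [one_mul]
    have : ∃ i, e' i ≠ e i := by
      by_contra hcon; push Not at hcon; exact h2 (Finsupp.ext hcon)
    obtain ⟨i, hi⟩ := this
    apply coeff_expand_of_not_dvd (i := i)
    have := h1 i
    have h3 := he i
    have h4 := he' i
    simp only [Finsupp.coe_tsub, Finsupp.coe_add, Finsupp.coe_smul, Pi.sub_apply, Pi.add_apply,
      Pi.smul_apply, smul_eq_mul] at this ⊢
    omega
  · subst h2
    exact absurd (le_add_self) h1
  · rfl

theorem parity {σ ι : Type} [DecidableEq σ] [Fintype ι] [DecidableEq ι] (e : ι → σ →₀ ℕ)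
    (he : ∀ k i, e k i ≤ 1) (hinj : Function.Injective e) (a : ι → MvPolynomial σ K)
    (h : ∑ k, monomial (e k) 1 * expand 2 (a k) = 0) (k : ι) : a k = 0 := by
  ext m
  have := congrArg (coeff (2 • m + e k)) h
  rw [coeff_sum] at this
  simp only [coeff_par _ _ (he k) (he _)] at this
  simpa [hinj.eq_iff] using this

/-- Fractional form of parity with four terms, for the Veronese surface. -/
theorem parity4 (a b c d : MvPolynomial (Fin 3) K)
    (h : expand 2 a + X 0 * X 1 * expand 2 b + X 0 * X 2 * expand 2 c + X 1 * X 2 * expand 2 d = 0) :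
    a = 0 ∧ b = 0 ∧ c = 0 ∧ d = 0 := by
  let e : Fin 4 → (Fin 3 →₀ ℕ) := ![0, Finsupp.single 0 1 + Finsupp.single 1 1,
    Finsupp.single 0 1 + Finsupp.single 2 1, Finsupp.single 1 1 + Finsupp.single 2 1]
  have he : ∀ k i, e k i ≤ 1 := by
    intro k i; fin_cases k <;> fin_cases i <;> simp [e]
  have hinj : Function.Injective e := by
    intro k l hkl
    have h0 := DFunLike.congr_fun hkl 0
    have h1 := DFunLike.congr_fun hkl 1
    have h2 := DFunLike.congr_fun hkl 2
    fin_cases k <;> fin_cases l <;> simp [e] at h0 h1 h2 ⊢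
  have := parity e he hinj ![a, b, c, d] (by
    simp only [Fin.sum_univ_four]
    rw [← h]
    simp only [e, X]
    simp [monomial_mul])
  exact ⟨this 0, this 1, this 2, this 3⟩

theorem parity_a (a d : MvPolynomial (Fin 3) K)
    (h : expand 2 a + X 0 * X 2 * expand 2 d = 0) : a = 0 ∧ d = 0 := by
  obtain ⟨h1, -, h2, -⟩ := parity4 a 0 d 0 (by simpa using h)
  exact ⟨h1, h2⟩

theorem parity_b (b c : MvPolynomial (Fin 3) K)
    (h : X 0 * expand 2 b + X 2 * expand 2 c = 0) : b = 0 ∧ c = 0 := by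
  obtain ⟨-, h1, -, h2⟩ := parity4 0 b 0 c (by simp; linear_combination X 1 * h)
  exact ⟨h1, h2⟩

open Polynomial in
theorem parity_t {U : Type} [CommRing U] [IsDomain U] (k : U) (A B : U[X])
    (h : A.comp (Polynomial.C k - Polynomial.X ^ 2) +
      Polynomial.X * B.comp (Polynomial.C k - Polynomial.X ^ 2) = 0) : A = 0 ∧ B = 0 := by
  have hq : (Polynomial.C k - Polynomial.X ^ 2 : U[X]).natDegree = 2 := by compute_degree!
  have hz : ∀ p : U[X], p.comp (Polynomial.C k - Polynomial.X ^ 2) = 0 → p = 0 := by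
    intro p hp
    rcases Polynomial.comp_eq_zero_iff.mp hp with h1 | ⟨-, h1⟩
    · exact h1
    · rw [h1] at hq; simp at hq
  have hB : B = 0 := by
    by_contra hB
    have h1 := congrArg Polynomial.natDegree (eq_neg_of_add_eq_zero_left h)
    rw [Polynomial.natDegree_neg, Polynomial.natDegree_mul Polynomial.X_ne_zero (fun h => hB (hz _ h)),
      Polynomial.natDegree_comp, Polynomial.natDegree_comp, hq, Polynomial.natDegree_X] at h1
    omega
  subst hB
  exact ⟨hz _ (by simpa using h), rfl⟩

/-- The map `K[y₀,y₂,y₄] → K[t,s,u]`. -/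
def hT (K : Type) [Field K] : MvPolynomial (Fin 3) K →ₐ[K] MvPolynomial (Fin 3) K :=
  aeval ![X 1 ^ 2, X 1 * X 2 - X 0 ^ 2, X 2 ^ 2]

def hh (K : Type) [Field K] :
    MvPolynomial (Fin 3) K →ₐ[K] Polynomial (MvPolynomial (Fin 2) K) :=
  aeval ![Polynomial.C (X 0 ^ 2), Polynomial.X, Polynomial.C (X 1 ^ 2)]

theorem hh_comp (a : MvPolynomial (Fin 3) K) :
    finSuccEquiv K 2 (hT K a) = (hh K a).comp (Polynomial.C (X 0 * X 1) - Polynomial.X ^ 2) := by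
  have h0 : finSuccEquiv K 2 (X 0) = Polynomial.X := finSuccEquiv_X_zero
  have h1 : finSuccEquiv K 2 (X 1) = Polynomial.C (X 0) := finSuccEquiv_X_succ (j := (0 : Fin 2))
  have h2 : finSuccEquiv K 2 (X 2) = Polynomial.C (X 1) := finSuccEquiv_X_succ (j := (1 : Fin 2))
  induction a using MvPolynomial.induction_on with
  | C r =>
    rw [← algebraMap_eq, AlgHom.commutes, AlgHom.commutes, AlgEquiv.commutes]
    rw [Polynomial.algebraMap_apply]; simp
  | add p q hp hq => rw [map_add, map_add, hp, hq, map_add, Polynomial.add_comp]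
  | mul_X p i hp =>
    rw [map_mul (hT K), map_mul (finSuccEquiv K 2), hp, map_mul (hh K), Polynomial.mul_comp]
    have : finSuccEquiv K 2 (hT K (X i)) =
        (hh K (X i)).comp (Polynomial.C (X 0 * X 1) - Polynomial.X ^ 2) := by
      fin_cases i
      · simp [hT, hh, h1]
      · simp [hT, hh, h0, h1, h2]
      · simp [hT, hh, h2]
    rw [this]

def chi (K : Type) [Field K] : Polynomial (MvPolynomial (Fin 2) K) →+* MvPolynomial (Fin 3) K :=
  Polynomial.eval₂RingHom (rename ![0, 2] : MvPolynomial (Fin 2) K →ₐ[K] MvPolynomial (Fin 3) K).toRingHom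
    (X 1 ^ 2)

theorem chi_hh (a : MvPolynomial (Fin 3) K) : chi K (hh K a) = expand 2 a := by
  induction a using MvPolynomial.induction_on with
  | C r =>
    rw [← algebraMap_eq, AlgHom.commutes, AlgHom.commutes, Polynomial.algebraMap_apply]
    simp [chi]
  | add p q hp hq => simp only [map_add, hp, hq]
  | mul_X p i hp =>
    simp only [map_mul, hp]
    congr 1
    fin_cases i <;> simp [hh, chi, Polynomial.eval₂_pow]

theorem hT_indep (a b c d : MvPolynomial (Fin 3) K)
    (h : hT K a + X 1 * X 0 * hT K b + X 0 * X 2 * hT K c + X 1 * X 2 * hT K d = 0) :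
    a = 0 ∧ b = 0 ∧ c = 0 ∧ d = 0 := by
  have h0 : finSuccEquiv K 2 (X 0) = Polynomial.X := finSuccEquiv_X_zero
  have h1 : finSuccEquiv K 2 (X 1) = Polynomial.C (X 0) := finSuccEquiv_X_succ (j := (0 : Fin 2))
  have h2 : finSuccEquiv K 2 (X 2) = Polynomial.C (X 1) := finSuccEquiv_X_succ (j := (1 : Fin 2))
  have := congrArg (finSuccEquiv K 2) h
  simp only [map_add, map_mul, hh_comp, h0, h1, h2, map_zero] at this
  obtain ⟨hA, hB⟩ := parity_t (X 0 * X 1 : MvPolynomial (Fin 2) K)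
    (hh K a + Polynomial.C (X 0) * Polynomial.C (X 1) * hh K d)
    (Polynomial.C (X 0) * hh K b + Polynomial.C (X 1) * hh K c) (by
      simp only [Polynomial.add_comp, Polynomial.mul_comp, Polynomial.C_comp, map_mul]
      linear_combination this)
  have hA' := congrArg (chi K) hA
  have hB' := congrArg (chi K) hB
  simp only [map_add, map_mul, chi_hh, map_zero] at hA' hB'
  simp [chi] at hA' hB'
  obtain ⟨ha, hd⟩ := parity_a a d hA'
  obtain ⟨hb, hc⟩ := parity_b b c hB'
  exact ⟨ha, hb, hc, hd⟩

end Parity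

section Vero
variable (K : Type) [Field K]

/-- The parametrization of the Veronese surface. -/
def ver : PS K 5 →ₐ[K] MvPolynomial (Fin 3) K :=
  aeval ![X 0 ^ 2, X 0 * X 1, X 0 * X 2, X 1 ^ 2, X 1 * X 2, X 2 ^ 2]

def tau6 : MvPolynomial (Fin 3) K →ₐ[K] PS K 5 := aeval ![X 0, X 3, X 5]

variable {K}
theorem ver_tau (a : MvPolynomial (Fin 3) K) : ver K (tau6 K a) = expand 2 a := by
  induction a using MvPolynomial.induction_on with
  | C r =>
    rw [← algebraMap_eq, AlgHom.commutes, AlgHom.commutes, AlgHom.commutes]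
  | add p q hp hq => simp only [map_add, hp, hq]
  | mul_X p i hp =>
    simp only [map_mul, hp]
    congr 1
    fin_cases i <;> simp [ver, tau6]

theorem vero_normal {A : Type} [CommRing A] [Algebra K A] (g : PS K 5 →ₐ[K] A)
    (r1 : g (X 0) * g (X 3) = g (X 1) * g (X 1)) (r2 : g (X 0) * g (X 4) = g (X 1) * g (X 2))
    (r3 : g (X 1) * g (X 4) = g (X 2) * g (X 3)) (r4 : g (X 0) * g (X 5) = g (X 2) * g (X 2))
    (r5 : g (X 1) * g (X 5) = g (X 2) * g (X 4)) (r6 : g (X 3) * g (X 5) = g (X 4) * g (X 4))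
    (f : PS K 5) : ∃ a b c d : MvPolynomial (Fin 3) K, g f = g (tau6 K a) +
      g (X 1) * g (tau6 K b) + g (X 2) * g (tau6 K c) + g (X 4) * g (tau6 K d) := by
  have t0 : tau6 K (X 0) = X 0 := by simp [tau6]
  have t1 : tau6 K (X 1) = X 3 := by simp [tau6]
  have t2 : tau6 K (X 2) = X 5 := by simp [tau6]
  induction f using MvPolynomial.induction_on with
  | C r =>
    refine ⟨C r, 0, 0, 0, ?_⟩
    simp [tau6]
  | add p q hp hq =>
    obtain ⟨a, b, c, d, h⟩ := hp
    obtain ⟨a', b', c', d', h'⟩ := hq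
    refine ⟨a + a', b + b', c + c', d + d', ?_⟩
    simp only [map_add, h, h']
    ring
  | mul_X p i hp =>
    obtain ⟨a, b, c, d, h⟩ := hp
    fin_cases i
    · refine ⟨a * X 0, b * X 0, c * X 0, d * X 0, ?_⟩
      simp [h, t0]; ring
    · refine ⟨b * X 0 * X 1, a, d * X 1, c * X 0, ?_⟩
      simp [h, t0, t1]
      linear_combination (-g (tau6 K b)) * r1 - g (tau6 K c) * r2 + g (tau6 K d) * r3
    · refine ⟨c * X 0 * X 2, d * X 2, a, b * X 0, ?_⟩
      simp [h, t0, t2]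
      linear_combination (-g (tau6 K b)) * r2 - g (tau6 K c) * r4 - g (tau6 K d) * r5
    · refine ⟨a * X 1, b * X 1, c * X 1, d * X 1, ?_⟩
      simp [h, t1]; ring
    · refine ⟨d * X 1 * X 2, c * X 2, b * X 1, a, ?_⟩
      simp [h, t1, t2]
      linear_combination (g (tau6 K b)) * r3 - g (tau6 K c) * r5 - g (tau6 K d) * r6
    · refine ⟨a * X 2, b * X 2, c * X 2, d * X 2, ?_⟩
      simp [h, t2]; ring

theorem vero_le_ker : AMD.veroneseIdeal K ≤ RingHom.ker (ver K) := by
  rw [AMD.veroneseIdeal, Ideal.span_le]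
  intro p hp
  simp only [Set.mem_insert_iff, Set.mem_singleton_iff] at hp
  change ver K p = 0
  rcases hp with rfl | rfl | rfl | rfl | rfl | rfl <;> simp [ver] <;> ring

theorem ker_ver : RingHom.ker (ver K) = AMD.veroneseIdeal K := by
  apply le_antisymm
  · intro f hf
    rw [← Ideal.Quotient.eq_zero_iff_mem]
    have hr : ∀ a b : PS K 5, a - b ∈ AMD.veroneseIdeal K →
        Ideal.Quotient.mkₐ K (AMD.veroneseIdeal K) a = Ideal.Quotient.mkₐ K (AMD.veroneseIdeal K) b :=
      fun a b h => Ideal.Quotient.eq.mpr h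
    obtain ⟨a, b, c, d, h⟩ := vero_normal (Ideal.Quotient.mkₐ K (AMD.veroneseIdeal K))
      (by simp only [← map_mul]; exact hr _ _ (Ideal.subset_span (by simp)))
      (by simp only [← map_mul]; exact hr _ _ (Ideal.subset_span (by simp)))
      (by simp only [← map_mul]; exact hr _ _ (Ideal.subset_span (by simp)))
      (by simp only [← map_mul]; exact hr _ _ (Ideal.subset_span (by simp)))
      (by simp only [← map_mul]; exact hr _ _ (Ideal.subset_span (by simp)))
      (by simp only [← map_mul]; exact hr _ _ (Ideal.subset_span (by simp))) f
    simp only [← map_mul, ← map_add] at h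
    have h2 : f - (tau6 K a + X 1 * tau6 K b + X 2 * tau6 K c + X 4 * tau6 K d) ∈
      AMD.veroneseIdeal K := Ideal.Quotient.eq.mp h
    have h3 : ver K _ = 0 := vero_le_ker h2
    have hf' : ver K f = 0 := hf
    simp only [map_sub, map_add, map_mul, ver_tau, hf'] at h3
    simp [ver] at h3
    obtain ⟨rfl, rfl, rfl, rfl⟩ := parity4 a b c d (by linear_combination -h3)
    simpa using Ideal.Quotient.eq_zero_iff_mem.mpr h2
  · exact vero_le_ker

end Vero

section S1
variable (K : Type) [Field K]

/-- The normal form of the projected Veronese parametrization. -/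
def pi0 : PS K 4 →ₐ[K] MvPolynomial (Fin 3) K :=
  aeval ![X 1 ^ 2, X 1 * X 0, X 1 * X 2 - X 0 ^ 2, X 0 * X 2, X 2 ^ 2]

def tau5 : MvPolynomial (Fin 3) K →ₐ[K] PS K 4 := aeval ![X 0, X 2, X 4]

variable {K}

theorem pi0_tau (a : MvPolynomial (Fin 3) K) : pi0 K (tau5 K a) = hT K a := by
  induction a using MvPolynomial.induction_on with
  | C r =>
    rw [← algebraMap_eq, AlgHom.commutes, AlgHom.commutes, AlgHom.commutes]
  | add p q hp hq => simp only [map_add, hp, hq]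
  | mul_X p i hp =>
    simp only [map_mul, hp]
    congr 1
    fin_cases i <;> simp [pi0, tau5, hT]

theorem pi0_normal (f : PS K 4) : ∃ (a b c d : MvPolynomial (Fin 3) K) (α : Fin 5 → PS K 4),
    f = tau5 K a + tau5 K b * X 1 + tau5 K c * X 3 -
      (α 0 * qd X 0 + α 1 * qd X 1 + α 2 * qd X 2 + α 3 * qd X 3 + α 4 * qd X 4) ∧
    0 = tau5 K d + (α 0 * X 0 + α 1 * X 1 + α 2 * X 2 + α 3 * X 3 + α 4 * X 4) := by
  have t0 : tau5 K (X 0) = X 0 := by simp [tau5]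
  have t1 : tau5 K (X 1) = X 2 := by simp [tau5]
  have t2 : tau5 K (X 2) = X 4 := by simp [tau5]
  simp only [qd]
  induction f using MvPolynomial.induction_on with
  | C r =>
    refine ⟨C r, 0, 0, 0, 0, ?_, ?_⟩ <;>
    simp [tau5]
  | add p q hp hq =>
    obtain ⟨a, b, c, d, α, h, k⟩ := hp
    obtain ⟨a', b', c', d', α', h', k'⟩ := hq
    refine ⟨a + a', b + b', c + c', d + d', α + α', ?_, ?_⟩
    · simp only [map_add, Pi.add_apply]
      linear_combination h + h'
    · simp only [map_add, Pi.add_apply]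
      linear_combination k + k'
  | mul_X p i hp =>
    obtain ⟨a, b, c, d, α, h, k⟩ := hp
    simp at h k ⊢
    have even : ∀ (x : MvPolynomial (Fin 3) K) (j : Fin 5), tau5 K x = X j → X j * p = p * X j →
      ∃ (a b c d : MvPolynomial (Fin 3) K) (α : Fin 5 → PS K 4),
      p * X j = tau5 K a + tau5 K b * X 1 + tau5 K c * X 3 -
      (α 0 * (X 0 * X 2 + X 1 * X 1) + α 1 * (X 0 * X 3) + α 2 * (X 0 * X 4 - X 1 * X 3) +
       α 3 * (X 1 * X 4) + α 4 * (X 2 * X 4 + X 3 * X 3)) ∧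
      0 = tau5 K d + (α 0 * X 0 + α 1 * X 1 + α 2 * X 2 + α 3 * X 3 + α 4 * X 4) := by
      intro x j hx _
      refine ⟨a * x, b * x, c * x, d * x, fun l => α l * X j, ?_, ?_⟩
      · simp only [map_mul, hx]
        linear_combination X j * h
      · simp only [map_mul, hx]
        linear_combination X j * k
    fin_cases i
    · exact even (X 0) 0 t0 (mul_comm _ _)
    · refine ⟨-b * X 0 * X 1 + c * X 0 * X 2, a, d * X 0, b * X 0 - c * X 1,
        ![α 0 * X 1 - tau5 K b, α 1 * X 1 + tau5 K d, α 2 * X 1 + tau5 K c, α 3 * X 1, α 4 * X 1], ?_, ?_⟩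
      · simp [t0, t1, t2]
        linear_combination X 1 * h
      · simp [t0, t1, t2]
        linear_combination X 1 * k
    · exact even (X 1) 2 t1 (mul_comm _ _)
    · refine ⟨b * X 0 * X 2 - c * X 1 * X 2, d * X 2, a, -b * X 1 + c * X 2,
        ![α 0 * X 3, α 1 * X 3, α 2 * X 3 + tau5 K b, α 3 * X 3 + tau5 K d, α 4 * X 3 - tau5 K c], ?_, ?_⟩
      · simp [t0, t1, t2]
        linear_combination X 3 * h
      · simp [t0, t1, t2]
        linear_combination X 3 * k
    · exact even (X 2) 4 t2 (mul_comm _ _)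

theorem s1 (f : PS K 4) (hf : pi0 K f = 0) : ∃ α : Fin 5 → PS K 4,
    α 0 * X 0 + α 1 * X 1 + α 2 * X 2 + α 3 * X 3 + α 4 * X 4 = 0 ∧
    f = α 0 * qd X 0 + α 1 * qd X 1 + α 2 * qd X 2 + α 3 * qd X 3 + α 4 * qd X 4 := by
  obtain ⟨a, b, c, d, α, h, k⟩ := pi0_normal f
  have h' := congrArg (pi0 K) h
  have k' := congrArg (pi0 K) k
  rw [hf] at h'
  simp only [map_add, map_sub, map_mul, pi0_tau, map_zero, qd] at h' k'
  simp [pi0] at h' k'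
  obtain ⟨rfl, rfl, rfl, rfl⟩ := hT_indep a b c d (by
    linear_combination -h' - X 1 * X 2 * k')
  refine ⟨-α, ?_, ?_⟩
  · simp at k ⊢
    linear_combination k
  · simp at h ⊢
    linear_combination h

end S1
end GPV

namespace GPV

section Gram
variable {K : Type} [Field K]

/-- The symmetric bilinear form attached to a point of `ℙ⁵`. -/
def Bf (p : Fin 6 → K) (a b : Fin 3 → K) : K :=
  a 0 * b 0 * p 0 + (a 0 * b 1 + a 1 * b 0) * p 1 + (a 0 * b 2 + a 2 * b 0) * p 2 +
    a 1 * b 1 * p 3 + (a 1 * b 2 + a 2 * b 1) * p 4 + a 2 * b 2 * p 5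

def dt (p : Fin 6 → K) : K :=
  p 0 * p 3 * p 5 - p 0 * p 4 * p 4 - p 1 * p 1 * p 5 + 2 * (p 1 * p 2 * p 4) - p 2 * p 2 * p 3

theorem exists_isotropic [IsAlgClosed K] (p : Fin 6 → K) :
    ∃ v : Fin 3 → K, v ≠ 0 ∧ Bf p v v = 0 := by
  by_cases h0 : p 0 = 0
  · refine ⟨![1, 0, 0], fun h => ?_, by simp [Bf, h0]⟩
    simpa using congrFun h 0
  · obtain ⟨x, hx⟩ := IsAlgClosed.exists_root
      (Polynomial.C (p 0) * Polynomial.X ^ 2 + Polynomial.C (2 * p 1) * Polynomial.X +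
        Polynomial.C (p 3)) (by
          rw [Polynomial.degree_quadratic h0]; norm_num)
    refine ⟨![x, 1, 0], fun h => ?_, ?_⟩
    · simpa using congrFun h 1
    · simp [Bf] at hx ⊢
      linear_combination hx

theorem exists_dual (p : Fin 6 → K) (hp : dt p ≠ 0) (v : Fin 3 → K) (hv : v ≠ 0) :
    ∃ w, Bf p v w = 1 := by
  by_contra hcon
  push Not at hcon
  have key : ∀ e, Bf p v e = 0 := by
    intro e
    by_contra he
    apply hcon ((Bf p v e)⁻¹ • e)
    have : Bf p v ((Bf p v e)⁻¹ • e) = (Bf p v e)⁻¹ * Bf p v e := by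
      simp [Bf]; ring
    rw [this, inv_mul_cancel₀ he]
  have k0 := key ![1, 0, 0]
  have k1 := key ![0, 1, 0]
  have k2 := key ![0, 0, 1]
  simp [Bf] at k0 k1 k2
  apply hv
  have e0 : dt p * v 0 = 0 := by
    simp only [dt]
    linear_combination (p 3 * p 5 - p 4 * p 4) * k0 + (p 2 * p 4 - p 1 * p 5) * k1 + (p 1 * p 4 - p 2 * p 3) * k2
  have e1 : dt p * v 1 = 0 := by
    simp only [dt]
    linear_combination (p 2 * p 4 - p 1 * p 5) * k0 + (p 0 * p 5 - p 2 * p 2) * k1 + (p 1 * p 2 - p 0 * p 4) * k2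
  have e2 : dt p * v 2 = 0 := by
    simp only [dt]
    linear_combination (p 1 * p 4 - p 2 * p 3) * k0 + (p 1 * p 2 - p 0 * p 4) * k1 + (p 0 * p 3 - p 1 * p 1) * k2
  ext i
  fin_cases i
  · exact (mul_eq_zero.mp e0).resolve_left hp
  · exact (mul_eq_zero.mp e1).resolve_left hp
  · exact (mul_eq_zero.mp e2).resolve_left hp

/-- The linear form `P v`. -/
def Pv (p : Fin 6 → K) (a : Fin 3 → K) : Fin 3 → K :=
  ![a 0 * p 0 + a 1 * p 1 + a 2 * p 2, a 0 * p 1 + a 1 * p 3 + a 2 * p 4,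
    a 0 * p 2 + a 1 * p 4 + a 2 * p 5]

def crs (a b : Fin 3 → K) : Fin 3 → K :=
  ![a 1 * b 2 - a 2 * b 1, a 2 * b 0 - a 0 * b 2, a 0 * b 1 - a 1 * b 0]

theorem Bf_crs (p : Fin 6 → K) (a b : Fin 3 → K) :
    Bf p (crs (Pv p a) (Pv p b)) (crs (Pv p a) (Pv p b)) =
      dt p * (Bf p a a * Bf p b b - Bf p a b ^ 2) := by
  simp [Bf, dt, crs, Pv]; ring

theorem Bf_crs1 (p : Fin 6 → K) (a b : Fin 3 → K) : Bf p a (crs (Pv p a) (Pv p b)) = 0 := by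
  simp [Bf, crs, Pv]; ring

theorem Bf_crs2 (p : Fin 6 → K) (a b : Fin 3 → K) : Bf p b (crs (Pv p a) (Pv p b)) = 0 := by
  simp [Bf, crs, Pv]; ring

theorem Bf_add_left (p : Fin 6 → K) (a b c : Fin 3 → K) : Bf p (a + b) c = Bf p a c + Bf p b c := by
  simp [Bf]; ring
theorem Bf_smul_left (p : Fin 6 → K) (r : K) (a c : Fin 3 → K) : Bf p (r • a) c = r * Bf p a c := by
  simp [Bf]; ring
theorem Bf_comm (p : Fin 6 → K) (a c : Fin 3 → K) : Bf p a c = Bf p c a := by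
  simp [Bf]; ring
theorem Bf_add_right (p : Fin 6 → K) (a b c : Fin 3 → K) : Bf p c (a + b) = Bf p c a + Bf p c b := by
  simp [Bf]; ring
theorem Bf_smul_right (p : Fin 6 → K) (r : K) (a c : Fin 3 → K) : Bf p c (r • a) = r * Bf p c a := by
  simp [Bf]; ring

theorem exists_gram [IsAlgClosed K] (p : Fin 6 → K) (hp : dt p ≠ 0) :
    ∃ a b c : Fin 3 → K, Bf p a a = 0 ∧ Bf p a b = 0 ∧ Bf p a c = 1 ∧ Bf p b b = 1 ∧
      Bf p b c = 0 ∧ Bf p c c = 0 := by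
  obtain ⟨v1, hv1, h11⟩ := exists_isotropic p
  obtain ⟨v3, h13⟩ := exists_dual p hp v1 hv1
  obtain ⟨μ, hμ⟩ := IsAlgClosed.exists_pow_nat_eq (-(dt p)⁻¹) (n := 2) (by norm_num)
  obtain ⟨β, hβ⟩ := IsAlgClosed.exists_pow_nat_eq (-(Bf p v3 v3)) (n := 2) (by norm_num)
  obtain ⟨v2, h12, h32, h22⟩ : ∃ v2, Bf p v1 v2 = 0 ∧ Bf p v3 v2 = 0 ∧ Bf p v2 v2 = 1 := by
    refine ⟨μ • crs (Pv p v1) (Pv p v3), ?_, ?_, ?_⟩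
    · rw [Bf_smul_right, Bf_crs1, mul_zero]
    · rw [Bf_smul_right, Bf_crs2, mul_zero]
    · rw [Bf_smul_right, Bf_smul_left, Bf_crs, h11, h13, ← mul_assoc, ← pow_two, hμ]
      field_simp
      ring
  have h31 := (Bf_comm p v3 v1).trans h13
  have h21 := (Bf_comm p v2 v1).trans h12
  have h23 := (Bf_comm p v2 v3).trans h32
  refine ⟨v1, v2 + (-β) • v1, v3 + β • v2, h11, ?_, ?_, ?_, ?_, ?_⟩ <;>
    simp only [Bf_add_left, Bf_add_right, Bf_smul_left, Bf_smul_right, h11, h12, h13, h21, h22, h23,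
      h31, h32]
  · ring
  · ring
  · ring
  · ring
  · linear_combination hβ

theorem gram_det (p : Fin 6 → K) (a b c : Fin 3 → K) (h1 : Bf p a a = 0) (h2 : Bf p a b = 0)
    (h3 : Bf p a c = 1) (h4 : Bf p b b = 1) (h5 : Bf p b c = 0) (h6 : Bf p c c = 0) :
    (Matrix.of ![b, a, c]).det ≠ 0 := by
  intro h
  have key : (Matrix.of ![b, a, c]).det ^ 2 * dt p = Bf p a a * (Bf p b b * Bf p c c - Bf p b c ^ 2) -
    Bf p a b * (Bf p a b * Bf p c c - Bf p b c * Bf p a c) + Bf p a c * (Bf p a b * Bf p b c - Bf p b b * Bf p a c) := by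
    rw [Matrix.det_fin_three]
    simp [Bf, dt]
    ring
  rw [h, h1, h2, h3, h4, h5, h6] at key
  simp at key

end Gram
end GPV

namespace GPV

section Lin
variable {K : Type} [Field K] {n : ℕ}

/-- Linear substitution. -/
def lin (M : Matrix (Fin n) (Fin n) K) : MvPolynomial (Fin n) K →ₐ[K] MvPolynomial (Fin n) K :=
  aeval fun i => ∑ j, C (M i j) * X j

theorem lin_X (M : Matrix (Fin n) (Fin n) K) (i : Fin n) : lin M (X i) = ∑ j, C (M i j) * X j := by
  simp [lin]

theorem lin_lin (M N : Matrix (Fin n) (Fin n) K) : (lin M).comp (lin N) = lin (N * M) := by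
  apply MvPolynomial.algHom_ext
  intro i
  rw [AlgHom.comp_apply, lin_X, lin_X, map_sum]
  simp only [map_mul, lin_X, Matrix.mul_apply, map_sum, Finset.sum_mul, Finset.mul_sum]
  rw [Finset.sum_comm]
  refine Finset.sum_congr rfl fun j _ => Finset.sum_congr rfl fun k _ => ?_
  rw [← algebraMap_eq, AlgHom.commutes, mul_assoc]

theorem lin_one : lin (1 : Matrix (Fin n) (Fin n) K) = AlgHom.id K _ := by
  apply MvPolynomial.algHom_ext
  intro i
  rw [lin_X]
  simp [Matrix.one_apply]

theorem lin_hom (M : Matrix (Fin n) (Fin n) K) (i : Fin n) : (lin M (X i)).IsHomogeneous 1 := by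
  rw [lin_X]
  apply IsHomogeneous.sum
  intro j _
  simpa using (isHomogeneous_C (Fin n) (M i j)).mul (isHomogeneous_X K j)

def linEquiv (M : Matrix (Fin n) (Fin n) K) (hM : IsUnit M.det) :
    MvPolynomial (Fin n) K ≃ₐ[K] MvPolynomial (Fin n) K :=
  AlgEquiv.ofAlgHom (lin M) (lin M⁻¹)
    (by rw [lin_lin, Matrix.nonsing_inv_mul _ hM, lin_one])
    (by rw [lin_lin, Matrix.mul_nonsing_inv _ hM, lin_one])

theorem eq_sum_of_hom1 (p : MvPolynomial (Fin n) K) (hp : p.IsHomogeneous 1) :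
    p = ∑ j, C (coeff (Finsupp.single j 1) p) * X j := by
  have hp' : p ∈ homogeneousSubmodule (Fin n) K 1 := hp
  rw [homogeneousSubmodule_one_eq_span_X] at hp'
  induction hp' using Submodule.span_induction with
  | mem x hx =>
    obtain ⟨i, rfl⟩ := hx
    simp [coeff_X', Finsupp.single_left_inj]
  | zero => simp
  | add x y hx hy h1 h2 =>
    have e1 := h1 (by rw [← mem_homogeneousSubmodule, homogeneousSubmodule_one_eq_span_X]; exact hx)
    have e2 := h2 (by rw [← mem_homogeneousSubmodule, homogeneousSubmodule_one_eq_span_X]; exact hy)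
    conv_lhs => rw [e1, e2]
    rw [← Finset.sum_add_distrib]
    simp [add_mul]
  | smul a x hx h =>
    have e1 := h (by rw [← mem_homogeneousSubmodule, homogeneousSubmodule_one_eq_span_X]; exact hx)
    conv_lhs => rw [e1]
    rw [Finset.smul_sum]
    simp [smul_eq_C_mul, mul_assoc]

end Lin

section Red
variable {K : Type} [Field K]

/-- The linear form on `ℙ⁵` corresponding to the product of two linear forms. -/
def LL (a b : Fin 3 → K) : PS K 5 :=
  C (a 0 * b 0) * X 0 + C (a 0 * b 1 + a 1 * b 0) * X 1 + C (a 0 * b 2 + a 2 * b 0) * X 2 +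
    C (a 1 * b 1) * X 3 + C (a 1 * b 2 + a 2 * b 1) * X 4 + C (a 2 * b 2) * X 5

def lf (a : Fin 3 → K) : MvPolynomial (Fin 3) K := ∑ j, C (a j) * X j

theorem ver_LL (a b : Fin 3 → K) : ver K (LL a b) = lf a * lf b := by
  have hC : ∀ r : K, ver K (C r) = C r := by
    intro r; rw [← algebraMap_eq, AlgHom.commutes, algebraMap_eq]
  simp only [LL, map_add, map_mul, hC, lf, Fin.sum_univ_three]
  simp [ver]
  ring

theorem hom_CX {n : ℕ} (c : K) (i : Fin n) : (C c * X i : MvPolynomial (Fin n) K).IsHomogeneous 1 := by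
  simpa using (isHomogeneous_C (Fin n) c).mul (isHomogeneous_X K i)

theorem psi_LL (ψ : PS K 5 ≃ₐ[K] PS K 5) (p : Fin 6 → K)
    (hp : ∀ i, p i = coeff (Finsupp.single 5 1) (ψ (X i))) (a b : Fin 3 → K) :
    coeff (Finsupp.single 5 1) (ψ (LL a b)) = Bf p a b := by
  have hC : ∀ r : K, ψ (C r) = C r := by
    intro r; rw [← algebraMap_eq, AlgEquiv.commutes]
  simp only [LL, map_add ψ, map_mul ψ, hC, coeff_add, coeff_C_mul, ← hp]
  simp only [Bf]

theorem psi_hom (ψ : PS K 5 ≃ₐ[K] PS K 5) (hψ : AMD.IsGrAut K 5 ψ) (a b : Fin 3 → K) :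
    (ψ (LL a b)).IsHomogeneous 1 := by
  have hC : ∀ r : K, ψ (C r) = C r := by
    intro r; rw [← algebraMap_eq, AlgEquiv.commutes]
  have h : ∀ (r : K) i, (C r * ψ (X i)).IsHomogeneous 1 := by
    intro r i
    simpa using (isHomogeneous_C (Fin 6) r).mul (hψ i)
  simp only [LL, map_add ψ, map_mul ψ, hC]
  exact (((((h _ _).add (h _ _)).add (h _ _)).add (h _ _)).add (h _ _)).add (h _ _)

theorem det_ne (ψ : PS K 5 ≃ₐ[K] PS K 5) (hψ : AMD.IsGrAut K 5 ψ)
    (h : ¬ Ideal.map ψ (Ideal.span {AMD.veroneseDet K}) ≤ AMD.pointIdl K 4)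
    (p : Fin 6 → K) (hp : ∀ i, p i = coeff (Finsupp.single 5 1) (ψ (X i))) : dt p ≠ 0 := by
  intro h0
  apply h
  rw [Ideal.map_span, Ideal.span_le, Set.image_singleton, Set.singleton_subset_iff]
  change ψ (AMD.veroneseDet K) ∈ AMD.pointIdl K 4
  rw [← Ideal.Quotient.eq_zero_iff_mem]
  let g : PS K 5 →+* PS K 5 ⧸ AMD.pointIdl K 4 := Ideal.Quotient.mk _
  have hX : ∀ i, g (ψ (X i)) = g (C (p i)) * g (X 5) := by
    intro i
    have hj : ∀ j : Fin 6, j ≠ 5 → g (X j) = 0 := by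
      intro j hj
      apply Ideal.Quotient.eq_zero_iff_mem.mpr
      exact Ideal.subset_span ⟨j, hj, rfl⟩
    conv_lhs => rw [eq_sum_of_hom1 _ (hψ i)]
    rw [Fin.sum_univ_six]
    simp only [map_add, map_mul]
    rw [hj 0 (by decide), hj 1 (by decide), hj 2 (by decide), hj 3 (by decide), hj 4 (by decide), hp]
    ring
  change g (ψ _) = 0
  have h2 : g (ψ (AMD.veroneseDet K)) = g (C (dt p)) * g (X 5) ^ 3 := by
    simp only [AMD.veroneseDet, dt, map_add, map_sub, map_mul, hX]
    simp only [map_ofNat]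
    ring
  rw [h2, h0]
  simp

theorem exists_rename (q : PS K 5) (hq : q.IsHomogeneous 1) (h5 : coeff (Finsupp.single 5 1) q = 0) :
    q = rename (Fin.castSucc : Fin 5 → Fin 6)
      (∑ i : Fin 5, C (coeff (Finsupp.single i.castSucc 1) q) * X i) := by
  conv_lhs => rw [eq_sum_of_hom1 q hq]
  rw [Fin.sum_univ_castSucc]
  have : Fin.last 5 = 5 := rfl
  rw [this, h5]
  simp

theorem pi0_lin_indep (w : Fin 5 → K) (h : pi0 K (∑ i, C (w i) * X i) = 0) : w = 0 := by
  have hC : ∀ r : K, pi0 K (C r) = C r := by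
    intro r; rw [← algebraMap_eq, AlgHom.commutes, algebraMap_eq]
  simp only [Fin.sum_univ_five, map_add, map_mul, hC] at h
  simp [pi0] at h
  have ev : ∀ v : Fin 3 → K, _ := fun v => congrArg (eval v) h
  have e1 := ev ![0, 1, 0]
  have e2 := ev ![0, 0, 1]
  have e3 := ev ![1, 0, 0]
  have e4 := ev ![1, 1, 0]
  have e5 := ev ![1, 0, 1]
  simp at e1 e2 e3 e4 e5
  ext i
  fin_cases i <;> simp_all

theorem reduction [IsAlgClosed K] (I : Ideal (PS K 4)) (hI : AMD.IsGenProjVeronese4 K I) :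
    ∃ σ : PS K 4 ≃ₐ[K] PS K 4, (∀ i, (σ (X i)).IsHomogeneous 1) ∧
      (∀ i, (σ.symm (X i)).IsHomogeneous 1) ∧ ∀ f, f ∈ I ↔ pi0 K (σ.symm f) = 0 := by
  obtain ⟨ψ, hψ, hdet, rfl⟩ := hI
  let p : Fin 6 → K := fun i => coeff (Finsupp.single 5 1) (ψ (X i))
  have hp : ∀ i, p i = coeff (Finsupp.single 5 1) (ψ (X i)) := fun _ => rfl
  obtain ⟨a, b, c, haa, hab, hac, hbb, hbc, hcc⟩ := exists_gram p (det_ne ψ hψ hdet p hp)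
  have hG := gram_det p a b c haa hab hac hbb hbc hcc
  let θ := linEquiv (Matrix.of ![b, a, c]) (isUnit_iff_ne_zero.mpr hG)
  have hθ0 : θ (X 0) = lf b := lin_X _ _
  have hθ1 : θ (X 1) = lf a := lin_X _ _
  have hθ2 : θ (X 2) = lf c := lin_X _ _
  let π : PS K 4 →ₐ[K] MvPolynomial (Fin 3) K :=
    ((ver K).comp ψ.symm.toAlgHom).comp (rename Fin.castSucc)
  have hπ : ∀ f, f ∈ Ideal.comap (rename (Fin.castSucc : Fin 5 → Fin 6))
      (Ideal.map ψ (AMD.veroneseIdeal K)) ↔ π f = 0 := by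
    intro f
    rw [Ideal.mem_comap]
    constructor
    · intro h
      obtain ⟨g, hg, hgf⟩ := (Ideal.mem_map_of_equiv ψ _).mp h
      change ver K (ψ.symm (rename Fin.castSucc f)) = 0
      rw [← hgf, AlgEquiv.symm_apply_apply]
      exact vero_le_ker hg
    · intro h
      have : ψ.symm (rename Fin.castSucc f) ∈ AMD.veroneseIdeal K := by
        rw [← ker_ver]; exact h
      have h2 := Ideal.mem_map_of_mem ψ this
      rwa [AlgEquiv.apply_symm_apply] at h2
  let L : Fin 5 → PS K 5 := ![LL a a, LL a b, LL a c - LL b b, LL b c, LL c c]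
  have hL1 : ∀ j, (ψ (L j)).IsHomogeneous 1 := by
    intro j
    fin_cases j
    · exact psi_hom ψ hψ _ _
    · exact psi_hom ψ hψ _ _
    · change (ψ (LL a c - LL b b)).IsHomogeneous 1
      rw [map_sub]
      exact (psi_hom ψ hψ _ _).sub (psi_hom ψ hψ _ _)
    · exact psi_hom ψ hψ _ _
    · exact psi_hom ψ hψ _ _
  have hL2 : ∀ j, coeff (Finsupp.single 5 1) (ψ (L j)) = 0 := by
    intro j
    fin_cases j
    · exact (psi_LL ψ p hp _ _).trans haa
    · exact (psi_LL ψ p hp _ _).trans hab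
    · change coeff _ (ψ (LL a c - LL b b)) = 0
      rw [map_sub, coeff_sub, psi_LL ψ p hp, psi_LL ψ p hp, hac, hbb, sub_self]
    · exact (psi_LL ψ p hp _ _).trans hbc
    · exact (psi_LL ψ p hp _ _).trans hcc
  let M : Matrix (Fin 5) (Fin 5) K :=
    Matrix.of fun j i => coeff (Finsupp.single i.castSucc 1) (ψ (L j))
  have hM : ∀ j, rename Fin.castSucc (lin M (X j)) = ψ (L j) := by
    intro j
    rw [exists_rename _ (hL1 j) (hL2 j), lin_X]
    rfl
  have hcomp : ∀ f, π (lin M f) = θ (pi0 K f) := by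
    intro f
    have : π.comp (lin M) = θ.toAlgHom.comp (pi0 K) := by
      apply MvPolynomial.algHom_ext
      intro j
      change ver K (ψ.symm (rename Fin.castSucc (lin M (X j)))) = θ (pi0 K (X j))
      rw [hM, AlgEquiv.symm_apply_apply]
      fin_cases j
      · change ver K (LL a a) = _
        rw [ver_LL]; simp [pi0, hθ1]; ring
      · change ver K (LL a b) = _
        rw [ver_LL]; simp [pi0, hθ1, hθ0]
      · change ver K (LL a c - LL b b) = _
        rw [map_sub, ver_LL, ver_LL]; simp [pi0, hθ1, hθ0, hθ2]; ring
      · change ver K (LL b c) = _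
        rw [ver_LL]; simp [pi0, hθ2, hθ0]
      · change ver K (LL c c) = _
        rw [ver_LL]; simp [pi0, hθ2]; ring
    exact DFunLike.congr_fun this f
  have hMu : IsUnit M.det := by
    rw [← Matrix.isUnit_iff_isUnit_det, ← Matrix.vecMul_injective_iff_isUnit]
    rw [← Matrix.coe_vecMulLinear, ← LinearMap.ker_eq_bot, LinearMap.ker_eq_bot']
    intro w hw
    apply pi0_lin_indep
    apply θ.injective
    rw [map_zero, ← hcomp]
    have : lin M (∑ i, C (w i) * X i) = 0 := by
      simp only [map_sum, map_mul, lin_X, Finset.mul_sum]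
      rw [Finset.sum_comm]
      apply Finset.sum_eq_zero
      intro j _
      have h1 : ∑ i, w i * M i j = 0 := congrFun hw j
      have h2 : ∀ i, lin M (C (w i)) * (C (M i j) * X j) = C (w i * M i j) * X j := by
        intro i
        rw [← algebraMap_eq, AlgHom.commutes, map_mul, mul_assoc]
      simp only [h2]
      rw [← Finset.sum_mul, ← map_sum, h1, map_zero, zero_mul]
    rw [this, map_zero]
  refine ⟨linEquiv M hMu, fun i => lin_hom _ _, fun i => lin_hom _ _, fun f => ?_⟩
  rw [hπ]
  have h1 : lin M ((linEquiv M hMu).symm f) = f := (linEquiv M hMu).apply_symm_apply f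
  conv_lhs => rw [← h1, hcomp]
  exact map_eq_zero_iff θ θ.injective

end Red
end GPV

namespace GPV

section BettiAux
variable {K : Type} [Field K]

theorem exists_idx (β : ℕ → ℕ) (h : ∀ j, j ≠ 2 → β j = 0) :
    Nonempty (((j : ℕ) × Fin (β j)) ≃ Fin (β 2)) := by
  refine ⟨(Equiv.ofBijective (fun t : Fin (β 2) => (⟨2, t⟩ : (j : ℕ) × Fin (β j))) ⟨?_, ?_⟩).symm⟩
  · intro a b hab
    simpa using hab
  · rintro ⟨j, t⟩
    by_cases hj : j = 2
    · subst hj; exact ⟨t, rfl⟩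
    · exact (Fin.cast (h j hj) t).elim0

theorem betti_aux (I : Ideal (PS K 4)) (β : ℕ → ℕ → ℕ) (h : ∀ i j, j ≠ 2 → β i j = 0)
    (F : ∀ i, (Fin (β (i + 2) 2) → PS K 4) →ₗ[PS K 4] (Fin (β (i + 1) 2) → PS K 4))
    (G : (Fin (β 1 2) → PS K 4) →ₗ[PS K 4] PS K 4)
    (hG : ∀ t, (G (Pi.single t 1)).IsHomogeneous 3)
    (hF : ∀ i t t', (F i (Pi.single t 1) t').IsHomogeneous 1)
    (h1 : LinearMap.range G = I) (h2 : LinearMap.ker G = LinearMap.range (F 0))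
    (h3 : ∀ i, LinearMap.ker (F i) = LinearMap.range (F (i + 1))) :
    AMD.HasBettiDiagram K 4 I β := by
  let E : ∀ i, ((j : ℕ) × Fin (β i j)) ≃ Fin (β i 2) := fun i => (exists_idx (β i) (h i)).some
  let L : ∀ i, AMD.FreeGr K 4 (β i) ≃ₗ[PS K 4] (Fin (β i 2) → PS K 4) := fun i =>
    (Finsupp.domLCongr (E i)).trans (Finsupp.linearEquivFunOnFinite _ _ _)
  have hL1 : ∀ i a, L i (Finsupp.single a 1) = Pi.single (E i a) 1 := by
    intro i a
    simp [L]
  have hL2 : ∀ i v a, ((L i).symm v) a = v (E i a) := by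
    intro i v a
    simp [L, Finsupp.domLCongr_symm]
  have hj : ∀ i j, Fin (β i j) → j = 2 := by
    intro i j t
    by_contra hj
    exact (Fin.cast (h i j hj) t).elim0
  refine ⟨fun i => (L (i + 1)).symm.toLinearMap ∘ₗ F i ∘ₗ (L (i + 2)).toLinearMap,
    G ∘ₗ (L 1).toLinearMap, ?_, ?_, ?_, ?_, ?_⟩
  · intro j t
    have := hj _ _ t
    subst this
    simpa [hL1] using hG _
  · intro i j t j' t'
    have := hj _ _ t
    have := hj _ _ t'
    subst_vars
    right
    refine ⟨1, le_rfl, by omega, ?_⟩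
    simp only [LinearMap.coe_comp, LinearEquiv.coe_coe, Function.comp_apply, hL1, hL2]
    exact hF _ _ _
  · rw [← h1, LinearMap.range_comp, LinearEquiv.range, Submodule.map_top]
  · ext v
    have e := Submodule.ext_iff.mp h2 (L 1 v)
    simp only [LinearMap.mem_ker, LinearMap.mem_range] at e
    simp only [LinearMap.mem_ker, LinearMap.mem_range, LinearMap.coe_comp, LinearEquiv.coe_coe,
      Function.comp_apply]
    rw [e]
    constructor
    · rintro ⟨w, hw⟩
      refine ⟨(L 2).symm w, ?_⟩
      simp only [LinearEquiv.apply_symm_apply]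
      change (L 1).symm (F 0 w) = v
      rw [hw]; simp
    · rintro ⟨w, hw⟩
      refine ⟨L 2 w, ?_⟩
      rw [← hw]
      exact ((L 1).apply_symm_apply _).symm
  · intro i
    ext v
    have e := Submodule.ext_iff.mp (h3 i) (L (i + 2) v)
    simp only [LinearMap.mem_ker, LinearMap.mem_range] at e
    simp only [LinearMap.mem_ker, LinearMap.mem_range, LinearMap.coe_comp, LinearEquiv.coe_coe,
      Function.comp_apply]
    rw [LinearEquiv.map_eq_zero_iff, e]
    constructor
    · rintro ⟨w, hw⟩
      refine ⟨(L (i + 3)).symm w, ?_⟩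
      rw [LinearEquiv.apply_symm_apply]
      change (L (i + 2)).symm (F (i + 1) w) = v
      rw [hw]; simp
    · rintro ⟨w, hw⟩
      refine ⟨L (i + 3) w, ?_⟩
      rw [← hw]
      exact ((L (i + 2)).apply_symm_apply _).symm

end BettiAux

section Maps
variable {S : Type} [CommRing S]

def nu (c1 c2 c3 : S) : Fin 10 → S := ![0, 0, -c2, -c1, c2, -c1, c3, -c3, 0, 0]

def prj (b : Fin 10 → S) : Fin 7 → S := ![b 0, b 1, b 2 + b 4, b 3 - b 5, b 6 + b 7, b 8, b 9]

def inc (e : Fin 7 → S) : Fin 10 → S := ![e 0, e 1, e 2, e 3, 0, 0, e 4, 0, e 5, e 6]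

def dotq (y a : Fin 5 → S) : S :=
  a 0 * qd y 0 + a 1 * qd y 1 + a 2 * qd y 2 + a 3 * qd y 3 + a 4 * qd y 4

theorem inc_prj (b : Fin 10 → S) : b = inc (prj b) + nu (-b 5) (b 4) (-b 7) := by
  ext i; fin_cases i <;> simp [inc, prj, nu]

theorem prj_inc_nu (e : Fin 7 → S) (c1 c2 c3 : S) : prj (inc e - nu c1 c2 c3) = e := by
  ext i; fin_cases i <;> simp [inc, prj, nu]

theorem kd2_add (y : Fin 5 → S) (b b' : Fin 10 → S) : kd2 y (b + b') = kd2 y b + kd2 y b' := by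
  ext i; fin_cases i <;> simp [kd2] <;> ring

theorem kd2_sub (y : Fin 5 → S) (b b' : Fin 10 → S) : kd2 y (b - b') = kd2 y b - kd2 y b' := by
  ext i; fin_cases i <;> simp [kd2] <;> ring

theorem kd2_nu (y : Fin 5 → S) (c1 c2 c3 : S) : kd2 y (nu c1 c2 c3) =
    ![c1 * y 4 + c2 * y 3, c1 * y 3 - c2 * y 2 - c3 * y 4, c2 * y 1 + c3 * y 3,
      - c1 * y 1 - c2 * y 0 - c3 * y 2, - c1 * y 0 + c3 * y 1] := by
  ext i; fin_cases i <;> simp [kd2, nu] <;> ring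

theorem kd2_kd3 (y : Fin 5 → S) (e : Fin 10 → S) : kd2 y (kd3 y e) = 0 := by
  ext i; fin_cases i <;> simp [kd2, kd3] <;> ring

theorem kd3_kd4 (y : Fin 5 → S) (e : Fin 5 → S) : kd3 y (kd4 y e) = 0 := by
  ext i; fin_cases i <;> simp [kd3, kd4] <;> ring

theorem kd4_kd5 (y : Fin 5 → S) (e : Fin 1 → S) : kd4 y (kd5 y e) = 0 := by
  ext i; fin_cases i <;> simp [kd4, kd5] <;> ring

theorem dotq_add (y a b : Fin 5 → S) : dotq y (a + b) = dotq y a + dotq y b := by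
  simp only [dotq, Pi.add_apply]; ring

theorem dotq_nu (y : Fin 5 → S) (c1 c2 c3 : S) : dotq y (kd2 y (nu c1 c2 c3)) = 0 := by
  rw [kd2_nu]; simp [dotq, qd]; ring

theorem dotq_inc_prj (y : Fin 5 → S) (b : Fin 10 → S) :
    dotq y (kd2 y (inc (prj b))) = dotq y (kd2 y b) := by
  conv_rhs => rw [inc_prj b, kd2_add, dotq_add, dotq_nu, add_zero]

theorem doty (y : Fin 5 → S) (b : Fin 10 → S) : kd2 y b 0 * y 0 + kd2 y b 1 * y 1 +
    kd2 y b 2 * y 2 + kd2 y b 3 * y 3 + kd2 y b 4 * y 4 = 0 := by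
  simp [kd2]; ring

def mG (y : Fin 5 → S) : (Fin 7 → S) →ₗ[S] S where
  toFun e := dotq y (kd2 y (inc e))
  map_add' a b := by simp [dotq, kd2, inc]; ring
  map_smul' a b := by simp [dotq, kd2, inc]; ring

def mF0 (y : Fin 5 → S) : (Fin 10 → S) →ₗ[S] (Fin 7 → S) where
  toFun e := prj (kd3 y e)
  map_add' a b := by ext i; fin_cases i <;> simp [prj, kd3] <;> ring
  map_smul' a b := by ext i; fin_cases i <;> simp [prj, kd3] <;> ring

def mF1 (y : Fin 5 → S) : (Fin 5 → S) →ₗ[S] (Fin 10 → S) where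
  toFun e := kd4 y e
  map_add' a b := by ext i; fin_cases i <;> simp [kd4] <;> ring
  map_smul' a b := by ext i; fin_cases i <;> simp [kd4] <;> ring

def mF2 (y : Fin 5 → S) : (Fin 1 → S) →ₗ[S] (Fin 5 → S) where
  toFun e := kd5 y e
  map_add' a b := by ext i; fin_cases i <;> simp [kd5] <;> ring
  map_smul' a b := by ext i; fin_cases i <;> simp [kd5] <;> ring

theorem ker_G {y : Fin 5 → S} (hr : Reg5 y) (hs : Syz y) :
    LinearMap.ker (mG y) = LinearMap.range (mF0 y) := by
  ext e
  simp only [LinearMap.mem_ker, LinearMap.mem_range]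
  constructor
  · intro he
    have he' : dotq y (kd2 y (inc e)) = 0 := he
    obtain ⟨c1, c2, c3, g0, g1, g2, g3, g4⟩ := hs.s2 (kd2 y (inc e)) (doty y _) he'
    obtain ⟨g, hg⟩ := kos2 hr (inc e - nu c1 c2 c3) (by
      rw [kd2_sub, kd2_nu, sub_eq_zero]
      ext i; fin_cases i
      · exact g0
      · exact g1
      · exact g2
      · exact g3
      · exact g4)
    refine ⟨g, ?_⟩
    change prj (kd3 y g) = e
    rw [← hg, prj_inc_nu]
  · rintro ⟨g, rfl⟩
    change dotq y (kd2 y (inc (prj (kd3 y g)))) = 0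
    rw [dotq_inc_prj, kd2_kd3]
    simp [dotq]

theorem ker_F0 {y : Fin 5 → S} (hr : Reg5 y) (hs : Syz y) :
    LinearMap.ker (mF0 y) = LinearMap.range (mF1 y) := by
  ext e
  simp only [LinearMap.mem_ker, LinearMap.mem_range]
  constructor
  · intro he
    have he' : prj (kd3 y e) = 0 := he
    have h1 := inc_prj (kd3 y e)
    have h0 : inc (0 : Fin 7 → S) = 0 := by ext i; fin_cases i <;> simp [inc]
    rw [he', h0, zero_add] at h1
    have h2 := kd2_kd3 y e
    rw [h1, kd2_nu] at h2
    have e0 := congrFun h2 0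
    have e1 := congrFun h2 1
    have e2 := congrFun h2 2
    have e3 := congrFun h2 3
    have e4 := congrFun h2 4
    obtain ⟨k1, k2, k3⟩ := hs.ind _ _ _ e0 e1 e2 e3 e4
    rw [k1, k2, k3] at h1
    have hz : nu (0 : S) 0 0 = 0 := by ext i; fin_cases i <;> simp [nu]
    obtain ⟨g, hg⟩ := kos3 hr e (h1.trans hz)
    exact ⟨g, hg.symm⟩
  · rintro ⟨g, rfl⟩
    change prj (kd3 y (kd4 y g)) = 0
    rw [kd3_kd4]
    ext i; fin_cases i <;> simp [prj]

theorem ker_F1 {y : Fin 5 → S} (hr : Reg5 y) :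
    LinearMap.ker (mF1 y) = LinearMap.range (mF2 y) := by
  ext e
  simp only [LinearMap.mem_ker, LinearMap.mem_range]
  constructor
  · intro he
    obtain ⟨g, hg⟩ := kos4 hr e he
    exact ⟨g, hg.symm⟩
  · rintro ⟨g, rfl⟩
    exact kd4_kd5 y g

theorem ker_F2 {y : Fin 5 → S} (hr : Reg5 y) : LinearMap.ker (mF2 y) = ⊥ := by
  rw [LinearMap.ker_eq_bot']
  intro g hg
  have h := congrFun hg 0
  change y 4 * g 0 = 0 at h
  have := hr.h4 (g 0) (by simpa using h)
  ext i
  fin_cases i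
  simpa using this

end Maps

section Betti
variable {K : Type} [Field K]

def bet : ℕ → ℕ → ℕ := fun i j => match i, j with
      | 4, 2 => 1 | 3, 2 => 5 | 2, 2 => 10 | 1, 2 => 7 | _, _ => 0

def mF (y : Fin 5 → PS K 4) :
    ∀ i, (Fin (bet (i + 2) 2) → PS K 4) →ₗ[PS K 4] (Fin (bet (i + 1) 2) → PS K 4)
  | 0 => mF0 y
  | 1 => mF1 y
  | 2 => mF2 y
  | _ + 3 => 0

theorem betti (I : Ideal (PS K 4)) (y : Fin 5 → PS K 4) (hy : ∀ i, (y i).IsHomogeneous 1)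
    (hr : Reg5 y) (hs : Syz y)
    (hI : ∀ f, f ∈ I ↔ ∃ α : Fin 5 → PS K 4,
      α 0 * y 0 + α 1 * y 1 + α 2 * y 2 + α 3 * y 3 + α 4 * y 4 = 0 ∧ f = dotq y α) :
    AMD.HasBettiDiagram K 4 I bet := by
  have h0 : ∀ n, (0 : PS K 4).IsHomogeneous n := fun n => isHomogeneous_zero _ _ _
  have hyn : ∀ i, (-(y i)).IsHomogeneous 1 := fun i => (hy i).neg
  have hq : ∀ i, (qd y i).IsHomogeneous 2 := by
    intro i
    fin_cases i
    · exact ((hy 0).mul (hy 2)).add ((hy 1).mul (hy 1))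
    · exact ((hy 0).mul (hy 3))
    · exact ((hy 0).mul (hy 4)).sub ((hy 1).mul (hy 3))
    · exact ((hy 1).mul (hy 4))
    · exact ((hy 2).mul (hy 4)).add ((hy 3).mul (hy 3))
  apply betti_aux I bet ?_ (mF y) (mG y) ?_ ?_ ?_ ?_ ?_
  · intro i j hj
    unfold bet
    split <;> simp_all
  · intro t
    have hk : ∀ i, (kd2 y (inc (Pi.single t 1)) i).IsHomogeneous 1 := by
      intro i
      change Fin 7 at t
      fin_cases t <;> fin_cases i <;> simp [kd2, inc, hy, hyn, h0]
    exact (((((hk 0).mul (hq 0)).add ((hk 1).mul (hq 1))).add ((hk 2).mul (hq 2))).add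
      ((hk 3).mul (hq 3))).add ((hk 4).mul (hq 4))
  · intro i t t'
    rcases i with _ | _ | _ | i
    · change Fin 10 at t
      change Fin 7 at t'
      change (prj (kd3 y (Pi.single t 1)) t').IsHomogeneous 1
      fin_cases t <;> fin_cases t' <;> simp [kd3, prj, hy, hyn, h0]
    · change Fin 5 at t
      change Fin 10 at t'
      change (kd4 y (Pi.single t 1) t').IsHomogeneous 1
      fin_cases t <;> fin_cases t' <;> simp [kd4, hy, hyn, h0]
    · change Fin 1 at t
      change Fin 5 at t'
      change (kd5 y (Pi.single t 1) t').IsHomogeneous 1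
      fin_cases t <;> fin_cases t' <;> simp [kd5, hy, hyn]
    · exact h0 1
  · ext f
    rw [hI]
    constructor
    · rintro ⟨e, rfl⟩
      exact ⟨kd2 y (inc e), doty y _, rfl⟩
    · rintro ⟨α, h1, rfl⟩
      obtain ⟨b, rfl⟩ := kos1 hr α (by linear_combination h1)
      exact ⟨prj b, dotq_inc_prj y b⟩
  · exact ker_G hr hs
  · intro i
    rcases i with _ | _ | _ | i
    · exact ker_F0 hr hs
    · exact ker_F1 hr
    · refine (ker_F2 hr).trans ?_
      exact LinearMap.range_zero.symm
    · ext v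
      have : v = 0 := by
        ext t; exact absurd t.2 (by simp [bet])
      simp [this]

end Betti
end GPV

namespace GPV

section Main
variable {K : Type} [Field K]

theorem pi0_qd (i : Fin 5) : pi0 K (qd X i) = pi0 K (X i) * (X 1 * X 2) := by
  fin_cases i <;> simp [qd, pi0] <;> ring

theorem sig_qd (σ : PS K 4 ≃ₐ[K] PS K 4) (i : Fin 5) :
    σ (qd X i) = qd (fun j => σ (X j)) i := by
  fin_cases i <;> simp [qd]

theorem mem_iff (σ : PS K 4 ≃ₐ[K] PS K 4) (I : Ideal (PS K 4))
    (h3 : ∀ f, f ∈ I ↔ pi0 K (σ.symm f) = 0) (f : PS K 4) :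
    f ∈ I ↔ ∃ α : Fin 5 → PS K 4,
      α 0 * σ (X 0) + α 1 * σ (X 1) + α 2 * σ (X 2) + α 3 * σ (X 3) + α 4 * σ (X 4) = 0 ∧
      f = dotq (fun j => σ (X j)) α := by
  rw [h3]
  constructor
  · intro h
    obtain ⟨α, ha, hb⟩ := s1 _ h
    refine ⟨fun i => σ (α i), ?_, ?_⟩
    · have := congrArg σ ha
      simpa using this
    · have := congrArg σ hb
      simpa [dotq, sig_qd] using this
  · rintro ⟨α, ha, rfl⟩
    have e : σ.symm (dotq (fun j => σ (X j)) α) = dotq X (fun j => σ.symm (α j)) := by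
      simp [dotq, ← sig_qd]
    have ha' := congrArg (fun t => pi0 K (σ.symm t)) ha
    simp only [map_add, map_mul, AlgEquiv.symm_apply_apply, map_zero] at ha'
    rw [e]
    simp only [dotq, map_add, map_mul, pi0_qd]
    linear_combination (X 1 * X 2) * ha'

theorem isPrime (σ : PS K 4 ≃ₐ[K] PS K 4) (I : Ideal (PS K 4))
    (h3 : ∀ f, f ∈ I ↔ pi0 K (σ.symm f) = 0) : I.IsPrime := by
  have : I = RingHom.ker ((pi0 K).comp (σ.symm : PS K 4 →ₐ[K] PS K 4)) := by
    ext f; rw [h3]; simp [RingHom.mem_ker]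
  rw [this]; exact RingHom.ker_isPrime _

theorem hom_mem_vars (p : PS K 4) (hp : p.IsHomogeneous 1) : p ∈ idealOfVars (Fin 5) K := by
  rw [eq_sum_of_hom1 p hp]
  exact Ideal.sum_mem _ fun i _ => Ideal.mul_mem_left _ _ (Ideal.subset_span ⟨i, rfl⟩)

theorem low_zero (σ : PS K 4 ≃ₐ[K] PS K 4) (h1 : ∀ i, (σ (X i)).IsHomogeneous 1) (I : Ideal (PS K 4))
    (h3 : ∀ f, f ∈ I ↔ pi0 K (σ.symm f) = 0) (d : ℕ) (hd : d < 3) (p : PS K 4) (hp : p ∈ I)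
    (hpd : p.IsHomogeneous d) : p = 0 := by
  obtain ⟨α, ha, hb⟩ := (mem_iff σ I h3 p).1 hp
  have hr : Reg5 (fun i => σ (X i)) := (reg_X K).map σ.toRingEquiv
  obtain ⟨b, hb'⟩ := kos1 hr α (by linear_combination ha)
  have hy : ∀ i, σ (X i) ∈ idealOfVars (Fin 5) K := fun i => hom_mem_vars _ (h1 i)
  set m := idealOfVars (Fin 5) K
  have hα : ∀ i, α i ∈ m := by
    intro i
    rw [hb']
    have := fun i j => Ideal.mul_mem_right (b j) m (hy i)
    fin_cases i
    · exact sub_mem (sub_mem (sub_mem (neg_mem (this _ _)) (this _ _)) (this _ _)) (this _ _)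
    · exact sub_mem (sub_mem (sub_mem (this _ _) (this _ _)) (this _ _)) (this _ _)
    · exact sub_mem (sub_mem (add_mem (this _ _) (this _ _)) (this _ _)) (this _ _)
    · exact sub_mem (add_mem (add_mem (this _ _) (this _ _)) (this _ _)) (this _ _)
    · exact add_mem (add_mem (add_mem (this _ _) (this _ _)) (this _ _)) (this _ _)
  have hyy : ∀ i j, σ (X i) * σ (X j) ∈ m ^ 2 := fun i j => by
    rw [pow_two]; exact Ideal.mul_mem_mul (hy i) (hy j)
  have hq : ∀ i, qd (fun j => σ (X j)) i ∈ m ^ 2 := by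
    intro i
    fin_cases i
    · exact add_mem (hyy _ _) (hyy _ _)
    · exact hyy _ _
    · exact sub_mem (hyy _ _) (hyy _ _)
    · exact hyy _ _
    · exact add_mem (hyy _ _) (hyy _ _)
  have hp3 : p ∈ m ^ 3 := by
    rw [hb, pow_succ']
    have := fun i => Ideal.mul_mem_mul (hα i) (hq i)
    exact add_mem (add_mem (add_mem (add_mem (this 0) (this 1)) (this 2)) (this 3)) (this 4)
  ext x
  rw [coeff_zero]
  by_cases hx : Finsupp.degree x = d
  · exact (mem_pow_idealOfVars_iff' 3 p).1 hp3 x (by omega)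
  · exact hpd.coeff_eq_zero hx

theorem pi0_hom (i : Fin 5) : (pi0 K (X i)).IsHomogeneous 2 := by
  have h := fun i : Fin 3 => isHomogeneous_X K i
  have hh := fun i j => (h i).mul (h j)
  fin_cases i
  · simpa [pi0, pow_two] using hh 1 1
  · simpa [pi0, pow_two] using hh 1 0
  · simpa [pi0, pow_two] using (hh 1 2).sub (hh 0 0)
  · simpa [pi0, pow_two] using hh 0 2
  · simpa [pi0, pow_two] using hh 2 2

theorem pi0_isHom (p : PS K 4) (n : ℕ) (hp : p.IsHomogeneous n) :
    (pi0 K p).IsHomogeneous (2 * n) := by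
  have e : pi0 K = aeval (fun i => pi0 K (X i)) := by
    ext i; simp
  rw [e]
  exact hp.aeval _ pi0_hom

theorem aut_isHom (σ : PS K 4 ≃ₐ[K] PS K 4) (h1 : ∀ i, (σ (X i)).IsHomogeneous 1)
    (p : PS K 4) (n : ℕ) (hp : p.IsHomogeneous n) : (σ p).IsHomogeneous n := by
  have e : (σ : PS K 4 →ₐ[K] PS K 4) = aeval (fun i => σ (X i)) := by
    ext i; simp
  have := hp.aeval (fun i => σ (X i)) h1
  rw [← e, one_mul] at this
  exact this

theorem homIdeal (σ : PS K 4 ≃ₐ[K] PS K 4) (h2 : ∀ i, (σ.symm (X i)).IsHomogeneous 1)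
    (I : Ideal (PS K 4)) (h3 : ∀ f, f ∈ I ↔ pi0 K (σ.symm f) = 0) : AMD.IsHomIdeal K 4 I := by
  intro p hp n
  rw [h3] at hp ⊢
  have key : homogeneousComponent (2 * n) (pi0 K (σ.symm p)) =
      pi0 K (σ.symm (homogeneousComponent n p)) := by
    have hh : ∀ i, (pi0 K (σ.symm (homogeneousComponent i p))).IsHomogeneous (2 * i) := fun i =>
      pi0_isHom _ _ (aut_isHom σ.symm h2 _ _ (homogeneousComponent_isHomogeneous i p))
    conv_lhs => rw [← sum_homogeneousComponent p]
    rw [map_sum, map_sum, map_sum]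
    rw [Finset.sum_eq_single n]
    · rw [homogeneousComponent_of_mem (hh n), if_pos rfl]
    · intro i _ hi
      rw [homogeneousComponent_of_mem (hh i), if_neg (by omega)]
    · intro hn
      rw [homogeneousComponent_eq_zero n p (by simpa using hn)]
      simp
  rw [← key, hp, map_zero]

theorem bettiI (σ : PS K 4 ≃ₐ[K] PS K 4) (h1 : ∀ i, (σ (X i)).IsHomogeneous 1)
    (I : Ideal (PS K 4)) (h3 : ∀ f, f ∈ I ↔ pi0 K (σ.symm f) = 0) :
    AMD.HasBettiDiagram K 4 I bet :=
  betti I (fun i => σ (X i)) h1 ((reg_X K).map σ.toRingEquiv) ((syz_X K).map σ.toRingEquiv)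
    (mem_iff σ I h3)

theorem w_not_range (f : PS K 4) (h : pi0 K f = X 1 * X 2) : False := by
  obtain ⟨a, b, c, d, α, h1, h2⟩ := pi0_normal f
  have e1 := congrArg (pi0 K) h1
  have e2 := congrArg (pi0 K) h2
  simp only [map_add, map_sub, map_mul, pi0_qd, pi0_tau, map_zero] at e1 e2
  have hx1 : pi0 K (X 1) = X 1 * X 0 := by simp [pi0]
  have hx3 : pi0 K (X 3) = X 0 * X 2 := by simp [pi0]
  have := hT_indep a b c (d - 1) (by
    rw [map_sub, map_one, ← hx1, ← hx3]
    linear_combination -e1 + h + (X 1 * X 2) * (-e2))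
  have hd : d = 1 := by linear_combination this.2.2.2
  rw [hd, map_one] at h2
  have := congrArg constantCoeff h2
  simp at this

/-- The embedding of the coordinate ring. -/
def iot (σ : PS K 4 ≃ₐ[K] PS K 4) (I : Ideal (PS K 4))
    (h3 : ∀ f, f ∈ I ↔ pi0 K (σ.symm f) = 0) : (PS K 4 ⧸ I) →ₐ[K] MvPolynomial (Fin 3) K :=
  Ideal.Quotient.liftₐ I ((pi0 K).comp (σ.symm : PS K 4 →ₐ[K] PS K 4)) (fun f hf => (h3 f).1 hf)

theorem iot_mk (σ : PS K 4 ≃ₐ[K] PS K 4) (I : Ideal (PS K 4))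
    (h3 : ∀ f, f ∈ I ↔ pi0 K (σ.symm f) = 0) (f : PS K 4) :
    iot σ I h3 (Ideal.Quotient.mk I f) = pi0 K (σ.symm f) := rfl

theorem iot_inj (σ : PS K 4 ≃ₐ[K] PS K 4) (I : Ideal (PS K 4))
    (h3 : ∀ f, f ∈ I ↔ pi0 K (σ.symm f) = 0) : Function.Injective (iot σ I h3) := by
  rw [injective_iff_map_eq_zero]
  intro a ha
  obtain ⟨f, rfl⟩ := Ideal.Quotient.mk_surjective a
  rw [iot_mk, ← h3] at ha
  exact Ideal.Quotient.eq_zero_iff_mem.2 ha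

theorem mul_w (σ : PS K 4 ≃ₐ[K] PS K 4) (h2 : ∀ i, (σ.symm (X i)).IsHomogeneous 1)
    (I : Ideal (PS K 4)) (h3 : ∀ f, f ∈ I ↔ pi0 K (σ.symm f) = 0)
    (x : PS K 4 ⧸ I) (hx : x ∈ AMD.maxIdl K 4 I) :
    ∃ x', iot σ I h3 x' = iot σ I h3 x * (X 1 * X 2) := by
  have hv : ∀ g : PS K 4, g ∈ idealOfVars (Fin 5) K → ∃ g', pi0 K g' = pi0 K g * (X 1 * X 2) := by
    intro g hg
    refine Submodule.span_induction ?_ ?_ ?_ ?_ hg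
    · rintro _ ⟨i, rfl⟩; exact ⟨_, pi0_qd i⟩
    · exact ⟨0, by simp⟩
    · rintro a b _ _ ⟨a', ha⟩ ⟨b', hb⟩
      exact ⟨a' + b', by rw [map_add, map_add, ha, hb, add_mul]⟩
    · rintro c a _ ⟨a', ha⟩
      exact ⟨c * a', by rw [smul_eq_mul, map_mul, map_mul, ha, mul_assoc]⟩
  obtain ⟨f, hf, rfl⟩ := (Ideal.mem_map_iff_of_surjective _ Ideal.Quotient.mk_surjective).1 hx
  have hs : σ.symm f ∈ idealOfVars (Fin 5) K := by
    have : idealOfVars (Fin 5) K ≤ (idealOfVars (Fin 5) K).comap (σ.symm : PS K 4 →ₐ[K] PS K 4) := by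
      rw [idealOfVars, Ideal.span_le]
      rintro _ ⟨i, rfl⟩
      exact hom_mem_vars _ (h2 i)
    exact this hf
  obtain ⟨g, hg⟩ := hv _ hs
  exact ⟨Ideal.Quotient.mk I (σ g), by rw [iot_mk, iot_mk, AlgEquiv.symm_apply_apply, hg]⟩

theorem depth (σ : PS K 4 ≃ₐ[K] PS K 4) (h1 : ∀ i, (σ (X i)).IsHomogeneous 1)
    (h2 : ∀ i, (σ.symm (X i)).IsHomogeneous 1)
    (I : Ideal (PS K 4)) (h3 : ∀ f, f ∈ I ↔ pi0 K (σ.symm f) = 0) : AMD.DepthEq K 4 I 1 := by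
  have := isPrime σ I h3
  constructor
  · refine ⟨[Ideal.Quotient.mk I (σ (X 0))], rfl, ?_, ?_⟩
    · intro x hx
      rw [List.mem_singleton] at hx
      subst hx
      exact Ideal.mem_map_of_mem _ (hom_mem_vars _ (h1 0))
    · intro i y hy
      have hi : i.1 = 0 := Nat.lt_one_iff.1 i.2
      have hi' : i = ⟨0, by simp⟩ := Fin.ext hi
      subst hi'
      simp only [List.get_eq_getElem, List.getElem_cons_zero, List.take_zero, List.not_mem_nil,
        Set.ofPred_false, Ideal.span_empty, Ideal.mem_bot, mul_eq_zero] at hy ⊢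
      rcases hy with hy | hy
      · rw [Ideal.Quotient.eq_zero_iff_mem, h3, AlgEquiv.symm_apply_apply] at hy
        simp [pi0] at hy
      · exact hy
  · intro rs hm hr
    match rs, hm, hr with
    | [], _, _ => simp
    | [_], _, _ => simp
    | a :: b :: l, hm, hr =>
      exfalso
      obtain ⟨a', ha'⟩ := mul_w σ h2 I h3 a (hm a (by simp))
      obtain ⟨b', hb'⟩ := mul_w σ h2 I h3 b (hm b (by simp))
      have ha0 : a ≠ 0 := by
        rintro rfl
        have := hr ⟨0, by simp⟩ 1
        simp at this
      have hab : b * a' = a * b' := by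
        apply iot_inj σ I h3
        rw [map_mul, map_mul, ha', hb']; ring
      have := hr ⟨1, by simp⟩ a'
      simp only [List.get_eq_getElem, List.getElem_cons_succ, List.getElem_cons_zero,
        List.take_succ_cons, List.take_zero, List.mem_singleton, Set.ofPred_eq_eq_singleton] at this
      have h := this (by rw [hab]; exact Ideal.mul_mem_right _ _ (Ideal.subset_span rfl))
      obtain ⟨c, rfl⟩ := Ideal.mem_span_singleton'.1 h
      obtain ⟨f, rfl⟩ := Ideal.Quotient.mk_surjective c
      have ha0' : iot σ I h3 a ≠ 0 := fun h => ha0 (iot_inj σ I h3 (by rw [h, map_zero]))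
      rw [map_mul, mul_comm] at ha'
      have := mul_left_cancel₀ ha0' ha'
      rw [iot_mk] at this
      exact w_not_range _ this

end Main

end GPV

namespace GPV

section Dim
variable {K : Type} [Field K]

theorem dim_le_of_integral {R B : Type} [CommRing R] [CommRing B] (f : R →+* B) (hf : f.IsIntegral) :
    ringKrullDim B ≤ ringKrullDim R := by
  let _ := f.toAlgebra
  have : Algebra.IsIntegral R B := ⟨hf⟩
  refine Order.krullDim_le_of_strictMono (PrimeSpectrum.comap f) ?_
  intro p q hpq
  exact Ideal.IsIntegral.comap_lt_comap (R := R) (I := p.asIdeal) (J := q.asIdeal) hpq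

theorem int_of_sq {R B : Type} [CommRing R] [CommRing B] (f : R →+* B) (x : B)
    (h : f.IsIntegralElem (x ^ 2)) : f.IsIntegralElem x := by
  let _ := f.toAlgebra
  exact IsIntegral.of_pow (R := R) (n := 2) (by norm_num) h

theorem hT_integral : (hT K).toRingHom.IsIntegral := by
  have h1 : (hT K).toRingHom.IsIntegralElem (X 1) := by
    apply int_of_sq
    have : (X 1 : MvPolynomial (Fin 3) K) ^ 2 = (hT K).toRingHom (X 0) := by simp [hT]
    rw [this]; exact RingHom.isIntegralElem_map _
  have h2 : (hT K).toRingHom.IsIntegralElem (X 2) := by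
    apply int_of_sq
    have : (X 2 : MvPolynomial (Fin 3) K) ^ 2 = (hT K).toRingHom (X 2) := by simp [hT]
    rw [this]; exact RingHom.isIntegralElem_map _
  have h0 : (hT K).toRingHom.IsIntegralElem (X 0) := by
    apply int_of_sq
    have : (X 0 : MvPolynomial (Fin 3) K) ^ 2 = X 1 * X 2 - (hT K).toRingHom (X 1) := by simp [hT]
    rw [this]; exact (h1.mul _ h2).sub _ (RingHom.isIntegralElem_map _)
  intro p
  induction p using MvPolynomial.induction_on with
  | C a =>
    have : (C a : MvPolynomial (Fin 3) K) = (hT K).toRingHom (C a) := by simp [hT]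
    rw [this]; exact RingHom.isIntegralElem_map _
  | add p q hp hq => exact hp.add _ hq
  | mul_X p i hp =>
    refine hp.mul _ ?_
    fin_cases i
    · exact h0
    · exact h1
    · exact h2

theorem dimR3 : ringKrullDim (MvPolynomial (Fin 3) K) = 3 := by
  rw [MvPolynomial.ringKrullDim_of_isNoetherianRing, ringKrullDim_eq_zero_of_field]
  simp

theorem dim (σ : PS K 4 ≃ₐ[K] PS K 4) (I : Ideal (PS K 4))
    (h3 : ∀ f, f ∈ I ↔ pi0 K (σ.symm f) = 0) : AMD.DimEq K 4 I 2 := by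
  let g : MvPolynomial (Fin 3) K →+* (PS K 4 ⧸ I) :=
    (Ideal.Quotient.mk I).comp (σ.toAlgHom.toRingHom.comp (tau5 K).toRingHom)
  have e : ((iot σ I h3).toRingHom.comp g) = (hT K).toRingHom := by
    refine RingHom.ext fun a => ?_
    change pi0 K (σ.symm (σ (tau5 K a))) = hT K a
    rw [AlgEquiv.symm_apply_apply, pi0_tau]
  have hi : ((iot σ I h3).toRingHom.comp g).IsIntegral := e ▸ hT_integral
  have a1 := dim_le_of_integral _ (RingHom.IsIntegral.tower_top _ _ hi)
  have a2 := dim_le_of_integral _ (RingHom.IsIntegral.tower_bot _ _ (iot_inj σ I h3) hi)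
  rw [dimR3] at a1 a2
  exact le_antisymm a2 a1

end Dim

end GPV

namespace GPV

section Deg
variable {K : Type} [Field K]

/-- The image of the linear forms. -/
def WW (K : Type) [Field K] : Submodule K (MvPolynomial (Fin 3) K) :=
  (homogeneousSubmodule (Fin 5) K 1).map (pi0 K).toLinearMap

theorem WW_pow (n : ℕ) :
    WW K ^ n = (homogeneousSubmodule (Fin 5) K n).map (pi0 K).toLinearMap := by
  rw [WW, ← Submodule.map_pow, homogeneousSubmodule_one_pow]

theorem WW_le : WW K ≤ homogeneousSubmodule (Fin 3) K 2 := by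
  rintro _ ⟨p, hp, rfl⟩
  exact pi0_isHom p 1 hp

theorem piX_mem (i : Fin 5) : pi0 K (X i) ∈ WW K := ⟨X i, isHomogeneous_X K i, rfl⟩

theorem H2_le : homogeneousSubmodule (Fin 3) K 2 ≤ WW K ⊔ Submodule.span K {X 1 * X 2} := by
  rw [← homogeneousSubmodule_one_pow, pow_two, homogeneousSubmodule_one_eq_span_X,
    Submodule.span_mul_span, Submodule.span_le]
  have hw : (X 1 * X 2 : MvPolynomial (Fin 3) K) ∈ WW K ⊔ Submodule.span K {X 1 * X 2} :=
    Submodule.mem_sup_right (Submodule.mem_span_singleton_self _)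
  have hW : ∀ i, pi0 K (X i) ∈ WW K ⊔ Submodule.span K {X 1 * X 2} := fun i =>
    Submodule.mem_sup_left (piX_mem i)
  have e0 : pi0 K (X 0) = X 1 * X 1 := by simp [pi0, pow_two]
  have e1 : pi0 K (X 1) = X 1 * X 0 := by simp [pi0]
  have e2 : (X 1 * X 2) - pi0 K (X 2) = X 0 * X 0 := by simp [pi0]; ring
  have e3 : pi0 K (X 3) = X 0 * X 2 := by simp [pi0]
  have e4 : pi0 K (X 4) = X 2 * X 2 := by simp [pi0, pow_two]
  rintro _ ⟨_, ⟨i, rfl⟩, _, ⟨j, rfl⟩, rfl⟩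
  fin_cases i <;> fin_cases j <;> simp only [SetLike.mem_coe]
  · exact e2 ▸ sub_mem hw (hW 2)
  · exact (mul_comm (X 1) (X 0 : MvPolynomial (Fin 3) K)) ▸ e1 ▸ hW 1
  · exact e3 ▸ hW 3
  · exact e1 ▸ hW 1
  · exact e0 ▸ hW 0
  · exact hw
  · exact (mul_comm (X 0) (X 2 : MvPolynomial (Fin 3) K)) ▸ e3 ▸ hW 3
  · exact (mul_comm (X 1) (X 2 : MvPolynomial (Fin 3) K)) ▸ hw
  · exact e4 ▸ hW 4

theorem qd_hom (i : Fin 5) : (qd (X : Fin 5 → PS K 4) i).IsHomogeneous 2 := by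
  have h := fun i : Fin 5 => isHomogeneous_X K i
  have hh := fun i j => (h i).mul (h j)
  fin_cases i
  · exact (hh 0 2).add (hh 1 1)
  · exact hh 0 3
  · exact (hh 0 4).sub (hh 1 3)
  · exact hh 1 4
  · exact (hh 2 4).add (hh 3 3)

theorem WW_mul_w : WW K * Submodule.span K {X 1 * X 2} ≤ WW K ^ 2 := by
  rw [WW_pow, WW, homogeneousSubmodule_one_eq_span_X, Submodule.map_span, Submodule.span_mul_span,
    Submodule.span_le]
  rintro _ ⟨_, ⟨_, ⟨i, rfl⟩, rfl⟩, _, rfl, rfl⟩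
  exact ⟨qd X i, qd_hom i, pi0_qd i⟩

theorem w_mul_w : Submodule.span K {(X 1 * X 2 : MvPolynomial (Fin 3) K)} *
    Submodule.span K {X 1 * X 2} ≤ WW K ^ 2 := by
  rw [Submodule.span_mul_span, Submodule.span_le]
  rintro _ ⟨_, rfl, _, rfl, rfl⟩
  have : (X 1 * X 2 : MvPolynomial (Fin 3) K) * (X 1 * X 2) = pi0 K (X 0) * pi0 K (X 4) := by
    simp [pi0]; ring
  simp only [SetLike.mem_coe]
  rw [this, pow_two]
  exact Submodule.mul_mem_mul (piX_mem 0) (piX_mem 4)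

theorem WW_sq : WW K ^ 2 = homogeneousSubmodule (Fin 3) K 2 ^ 2 := by
  apply le_antisymm (pow_le_pow_left₀ bot_le WW_le 2)
  calc _ ≤ (WW K ⊔ Submodule.span K {X 1 * X 2}) ^ 2 := pow_le_pow_left₀ bot_le H2_le 2
    _ ≤ _ := by
      rw [pow_two, Submodule.sup_mul, Submodule.mul_sup, Submodule.mul_sup]
      refine sup_le (sup_le (pow_two _).ge WW_mul_w) (sup_le ?_ w_mul_w)
      rw [mul_comm]; exact WW_mul_w

theorem H2_mul_WW : homogeneousSubmodule (Fin 3) K 2 * WW K =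
    homogeneousSubmodule (Fin 3) K 2 ^ 2 := by
  apply le_antisymm
  · rw [pow_two]; exact mul_le_mul_right WW_le _
  · rw [← WW_sq, pow_two]; exact mul_le_mul_left WW_le _

theorem WW_pow_eq (n : ℕ) (hn : n ≠ 1) : WW K ^ n = homogeneousSubmodule (Fin 3) K (2 * n) := by
  have h : WW K ^ n = homogeneousSubmodule (Fin 3) K 2 ^ n := by
    match n, hn with
    | 0, _ => simp
    | n + 2, _ =>
      induction n with
      | zero => exact WW_sq
      | succ n ih =>
        rw [pow_succ, ih (by omega), pow_succ, mul_assoc, H2_mul_WW]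
        ring
  rw [h, ← homogeneousSubmodule_one_pow, ← pow_mul, homogeneousSubmodule_one_pow]

theorem finrank_H (m : ℕ) : Module.finrank K (homogeneousSubmodule (Fin 3) K m) =
    (m + 2).choose 2 := by
  have e : homogeneousSubmodule (Fin 3) K m = restrictSupport K {d | d.degree = m} :=
    homogeneousSubmodule_eq_finsupp_supported _ _ _
  rw [e, Module.finrank_eq_nat_card_basis (basisRestrictSupport K _)]
  have : {d : Fin 3 →₀ ℕ | d.degree = m} = ((Finset.univ : Finset (Fin 3)).finsuppAntidiag m) := by
    ext d
    simp [Finsupp.degree_eq_sum]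
  rw [this]
  simp only [SetLike.coe_sort_coe, Nat.card_eq_fintype_card, Fintype.card_coe]
  rw [Finset.card_finsuppAntidiag_nat_eq_choose]
  simp only [Finset.card_univ, Fintype.card_fin]
  rw [show 3 + m - 1 = m + 2 by omega, Nat.choose_symm_add]

theorem finrank_WW : Module.finrank K (WW K) = 5 := by
  have : WW K = Submodule.span K (Set.range fun i : Fin 5 => pi0 K (X i)) := by
    rw [WW, homogeneousSubmodule_one_eq_span_X, Submodule.map_span, ← Set.range_comp]
    rfl
  rw [this, finrank_span_eq_card]
  · simp
  · rw [Fintype.linearIndependent_iff]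
    intro g hg i
    have : g = 0 := by
      apply pi0_lin_indep
      rw [map_sum, ← hg]
      refine Finset.sum_congr rfl fun i _ => ?_
      rw [← smul_eq_C_mul, map_smul]
    rw [this]; rfl

theorem finrank_quot (σ : PS K 4 ≃ₐ[K] PS K 4) (h1 : ∀ i, (σ (X i)).IsHomogeneous 1)
    (h2 : ∀ i, (σ.symm (X i)).IsHomogeneous 1)
    (I : Ideal (PS K 4)) (h3 : ∀ f, f ∈ I ↔ pi0 K (σ.symm f) = 0) (n : ℕ) :
    Module.finrank K (AMD.quotComponent K 4 I n) = Module.finrank K ((WW K ^ n : Submodule K _)) := by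
  have e : (AMD.quotComponent K 4 I n).map (iot σ I h3).toLinearMap = WW K ^ n := by
    rw [WW_pow]
    ext q
    constructor
    · rintro ⟨_, ⟨p, hp, rfl⟩, rfl⟩
      exact ⟨σ.symm p, aut_isHom σ.symm h2 p n hp, rfl⟩
    · rintro ⟨p, hp, rfl⟩
      refine ⟨Ideal.Quotient.mk I (σ p), ⟨σ p, aut_isHom σ h1 p n hp, rfl⟩, ?_⟩
      change pi0 K (σ.symm (σ p)) = pi0 K p
      rw [AlgEquiv.symm_apply_apply]
  rw [← e]
  exact (Submodule.equivMapOfInjective (iot σ I h3).toLinearMap (iot_inj σ I h3) _).finrank_eq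

theorem hilb (σ : PS K 4 ≃ₐ[K] PS K 4) (h1 : ∀ i, (σ (X i)).IsHomogeneous 1)
    (h2 : ∀ i, (σ.symm (X i)).IsHomogeneous 1)
    (I : Ideal (PS K 4)) (h3 : ∀ f, f ∈ I ↔ pi0 K (σ.symm f) = 0) (n : ℕ) :
    (Module.finrank K (AMD.quotComponent K 4 I n) : ℤ) =
      if n = 1 then (5 : ℤ) else ((n : ℤ) + 1) * (2 * (n : ℤ) + 1) := by
  rw [finrank_quot σ h1 h2 I h3]
  split_ifs with h
  · subst h; rw [pow_one, finrank_WW]; rfl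
  · rw [WW_pow_eq n h, finrank_H]
    have : (2 * n + 2).choose 2 = (n + 1) * (2 * n + 1) := by
      rw [Nat.choose_two_right]
      apply Nat.div_eq_of_eq_mul_left (by norm_num)
      rw [show 2 * n + 2 - 1 = 2 * n + 1 by omega]
      ring
    rw [this]; push_cast; ring

theorem degree (σ : PS K 4 ≃ₐ[K] PS K 4) (h1 : ∀ i, (σ (X i)).IsHomogeneous 1)
    (h2 : ∀ i, (σ.symm (X i)).IsHomogeneous 1)
    (I : Ideal (PS K 4)) (h3 : ∀ f, f ∈ I ↔ pi0 K (σ.symm f) = 0) : AMD.DegreeEq K 4 I 2 4 := by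
  refine ⟨1 + 2 * Polynomial.X + 3 * Polynomial.X ^ 2 - 3 * Polynomial.X ^ 3 + Polynomial.X ^ 4,
    ?_, by norm_num⟩
  have e : AMD.hilbSeries K 4 I =
      PowerSeries.mk fun n => if n = 1 then (5 : ℤ) else (n + 1) * (2 * n + 1) := by
    unfold AMD.hilbSeries
    congr 1
    funext n
    exact hilb σ h1 h2 I h3 n
  rw [e]
  set F : PowerSeries ℤ := PowerSeries.mk fun n => if n = 1 then (5 : ℤ) else (n + 1) * (2 * n + 1)
  have e3 : F * (1 - PowerSeries.X) ^ (2 + 1) =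
      F - 3 * (F * PowerSeries.X ^ 1) + 3 * (F * PowerSeries.X ^ 2) - F * PowerSeries.X ^ 3 := by
    ring
  rw [e3]
  have hc : ∀ n (G : PowerSeries ℤ), PowerSeries.coeff n (3 * G) = 3 * PowerSeries.coeff n G := by
    intro n G
    rw [show (3 : PowerSeries ℤ) = PowerSeries.C 3 from rfl, PowerSeries.coeff_C_mul]
  have p2 : ∀ n, (2 * Polynomial.X : Polynomial ℤ).coeff n = if n = 1 then 2 else 0 := by
    intro n
    rw [show (2 : Polynomial ℤ) = Polynomial.C 2 from rfl, Polynomial.coeff_C_mul,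
      Polynomial.coeff_X]
    grind
  have p3 : ∀ n k, (3 * Polynomial.X ^ k : Polynomial ℤ).coeff n = if n = k then 3 else 0 := by
    intro n k
    rw [show (3 : Polynomial ℤ) = Polynomial.C 3 from rfl, Polynomial.coeff_C_mul,
      Polynomial.coeff_X_pow]
    grind
  ext n
  simp only [map_add, map_sub, hc, PowerSeries.coeff_mul_X_pow', F, PowerSeries.coeff_mk,
    Polynomial.coeff_add, Polynomial.coeff_sub, p2, p3, Polynomial.coeff_X_pow, Polynomial.coeff_one]
  match n with
  | 0 => norm_num
  | 1 => norm_num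
  | 2 => norm_num
  | 3 => norm_num
  | 4 => norm_num
  | n + 5 =>
    simp only [show n + 5 - 1 = n + 4 by omega, show n + 5 - 2 = n + 3 by omega,
      show n + 5 - 3 = n + 2 by omega]
    rw [if_neg (by omega), if_pos (by omega), if_neg (by omega), if_pos (by omega),
      if_neg (by omega), if_pos (by omega), if_neg (by omega), if_neg (by omega),
      if_neg (by omega), if_neg (by omega), if_neg (by omega), if_neg (by omega)]
    push_cast
    ring

end Deg

end GPV

/-- **Theorem 2.1 (c) (the exceptional case).**  A generic projection `X ⊆ ℙ^4_K` of
the Veronese surface `F ⊆ ℙ^5_K` is a non-degenerate surface of degree `4` and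
codimension `2` with `depth A_X = 1`, its ideal contains no quadric, and its Betti
diagram is `β₁₂ = 7, β₂₂ = 10, β₃₂ = 5, β₄₂ = 1` (all other entries zero). -/
theorem generic_projection_of_veronese_surface
    (K : Type) [Field K] [IsAlgClosed K]
    (I : Ideal (PS K 4)) (hI : AMD.IsGenProjVeronese4 K I) :
    I.IsPrime ∧ AMD.IsHomIdeal K 4 I ∧ AMD.Nondeg K 4 I ∧
    AMD.DimEq K 4 I 2 ∧ AMD.DegreeEq K 4 I 2 4 ∧
    AMD.DepthEq K 4 I 1 ∧
    (∀ p ∈ I, p.IsHomogeneous 2 → p = 0) ∧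
    AMD.HasBettiDiagram K 4 I (fun i j => match i, j with
      | 1, 2 => 7 | 2, 2 => 10 | 3, 2 => 5 | 4, 2 => 1 | _, _ => 0) := by
  obtain ⟨σ, h1, h2, h3⟩ := GPV.reduction I hI
  refine ⟨GPV.isPrime σ I h3, GPV.homIdeal σ h2 I h3,
    fun p hp hd => GPV.low_zero σ h1 I h3 1 (by norm_num) p hp hd,
    GPV.dim σ I h3, GPV.degree σ h1 h2 I h3, GPV.depth σ h1 h2 I h3,
    fun p hp hd => GPV.low_zero σ h1 I h3 2 (by norm_num) p hp hd,
    ?_⟩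
  have hb := GPV.bettiI σ h1 I h3
  convert hb using 1
  funext i j
  rcases i with _ | _ | _ | _ | _ | i <;> rcases j with _ | _ | _ | j <;> rfl
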